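/- Let V be an irreducible integrable 𝔏(A)-module with finite-dimensional weight spaces on which the affine center K⊗1 acts trivially, and M its highest weight space. Then there exists a cofinite ideal R of A such that (Vir⊗R)·M = 0. -/

import Mathlib

noncomputable section

/-!
Common setup: a realization of the loop affine-Virasoro algebra
`𝔏(A) = ((g̊ ⊗ ℂ[t,t⁻¹] ⊕ ℂK) ⋊ Vir) ⊗ A`.

* `g` plays the role of the finite dimensional simple Lie algebra `g̊`.
* `A` is a commutative associative unital `ℂ`-algebra.
* `L` plays the role of `𝔏(A)`; the structure fields record the generators
  `E n x a = (x ⊗ tⁿ) ⊗ a`, `D n a = dₙ ⊗ a`, `K a = K ⊗ a`, `C a = C ⊗ a`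
  together with the defining bracket relations, and the fact that the
  generators span `L`.
-/

/-- An ideal of a `ℂ`-algebra is cofinite if the quotient is finite dimensional. -/
def IsCofiniteIdeal {A : Type*} [CommRing A] [Algebra ℂ A] (I : Ideal A) : Prop :=
  FiniteDimensional ℂ (A ⧸ I)

/-- A realization of the loop affine-Virasoro algebra `𝔏(A)`. -/
structure LoopAffVir (g : Type*) [LieRing g] [LieAlgebra ℂ g]
    (A : Type*) [CommRing A] [Algebra ℂ A]
    (L : Type*) [LieRing L] [LieAlgebra ℂ L] : Type _ where
  /-- the Cartan subalgebra `h̊` of `g̊` -/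
  H : LieSubalgebra ℂ g
  isCartan : H.IsCartanSubalgebra
  /-- the invariant nondegenerate symmetric bilinear form on `g̊` -/
  form : g →ₗ[ℂ] g →ₗ[ℂ] ℂ
  form_symm : ∀ x y : g, form x y = form y x
  form_nondeg : ∀ x : g, (∀ y : g, form x y = 0) → x = 0
  form_invariant : ∀ x y z : g, form ⁅x, y⁆ z = form x ⁅y, z⁆
  /-- the root space `g̊_α` -/
  rootSp : Module.Dual ℂ H → Submodule ℂ g
  rootSp_def : ∀ (α : Module.Dual ℂ H) (x : g),
      x ∈ rootSp α ↔ ∀ h : H, ⁅(h : g), x⁆ = α h • x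
  /-- a choice of positive roots `Δ̊₊` -/
  Δplus : Set (Module.Dual ℂ H)
  Δplus_root : ∀ α ∈ Δplus, α ≠ 0 ∧ rootSp α ≠ ⊥
  Δplus_cover : ∀ α : Module.Dual ℂ H, α ≠ 0 → rootSp α ≠ ⊥ → α ∈ Δplus ∨ -α ∈ Δplus
  Δplus_disj : ∀ α ∈ Δplus, -α ∉ Δplus
  /-- `E n x a = (x ⊗ tⁿ) ⊗ a` -/
  E : ℤ → g →ₗ[ℂ] A →ₗ[ℂ] L
  /-- `D n a = dₙ ⊗ a` -/
  D : ℤ → A →ₗ[ℂ] L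
  /-- `K a = K ⊗ a` (affine center) -/
  K : A →ₗ[ℂ] L
  /-- `C a = C ⊗ a` (Virasoro center) -/
  C : A →ₗ[ℂ] L
  lie_EE : ∀ (n m : ℤ) (x y : g) (a b : A),
      ⁅E n x a, E m y b⁆ = E (n + m) ⁅x, y⁆ (a * b)
        + (if m = -n then (n : ℂ) * form x y else 0) • K (a * b)
  lie_DE : ∀ (n m : ℤ) (x : g) (a b : A),
      ⁅D n a, E m x b⁆ = (m : ℂ) • E (m + n) x (a * b)
  lie_DD : ∀ (n m : ℤ) (a b : A),
      ⁅D n a, D m b⁆ = ((m : ℂ) - (n : ℂ)) • D (n + m) (a * b)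
        + (if m = -n then (((n : ℂ) ^ 3 - (n : ℂ)) / 12) else 0) • C (a * b)
  K_central : ∀ (a : A) (z : L), ⁅K a, z⁆ = 0
  C_central : ∀ (a : A) (z : L), ⁅C a, z⁆ = 0
  span_top : Submodule.span ℂ
      ({z : L | ∃ (n : ℤ) (x : g) (a : A), z = E n x a}
        ∪ {z : L | ∃ (n : ℤ) (a : A), z = D n a}
        ∪ {z : L | ∃ a : A, z = K a}
        ∪ {z : L | ∃ a : A, z = C a}) = ⊤

namespace LoopAffVir

variable {g A L : Type*} [LieRing g] [LieAlgebra ℂ g] [CommRing A] [Algebra ℂ A]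
  [LieRing L] [LieAlgebra ℂ L] (S : LoopAffVir g A L)

/-- Generators of the Cartan subalgebra `h̄ = h̊ ⊕ ℂK ⊕ ℂd₀ ⊕ ℂC ⊆ 𝔏 ⊗ 1`. -/
def cartanSet : Set L :=
  {z : L | ∃ h ∈ S.H, z = S.E 0 h 1} ∪ {S.K 1, S.D 0 1, S.C 1}

/-- The Cartan subalgebra `h̄` of `𝔏(A)`. -/
def cartan : Submodule ℂ L := Submodule.span ℂ S.cartanSet

/-- `h ∈ h̊` as an element of `h̄`. -/
def eH (h : S.H) : S.cartan :=
  ⟨S.E 0 h 1, Submodule.subset_span (Set.mem_union_left _ ⟨(h : g), h.2, rfl⟩)⟩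

/-- `K ⊗ 1` as an element of `h̄`. -/
def K1 : S.cartan :=
  ⟨S.K 1, Submodule.subset_span (Set.mem_union_right _ (by simp))⟩

/-- `d₀ ⊗ 1` as an element of `h̄`. -/
def d0 : S.cartan :=
  ⟨S.D 0 1, Submodule.subset_span (Set.mem_union_right _ (by simp))⟩

/-- `C ⊗ 1` as an element of `h̄`. -/
def C1 : S.cartan :=
  ⟨S.C 1, Submodule.subset_span (Set.mem_union_right _ (by simp))⟩

variable (V : Type*) [AddCommGroup V] [Module ℂ V] [LieRingModule L V] [LieModule ℂ L V]

/-- The weight space of an `𝔏(A)`-module attached to `χ ∈ h̄*`. -/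
def wtSpace (χ : Module.Dual ℂ S.cartan) : Submodule ℂ V where
  carrier := {v : V | ∀ h : S.cartan, ⁅(h : L), v⁆ = χ h • v}
  add_mem' := by
    intro a b ha hb h
    rw [lie_add, ha h, hb h, smul_add]
  zero_mem' := by
    intro h
    rw [lie_zero, smul_zero]
  smul_mem' := by
    intro c v hv h
    rw [lie_smul, hv h, smul_comm]

/-- The set of weights `P(V)`. -/
def weights : Set (Module.Dual ℂ S.cartan) := {χ | S.wtSpace V χ ≠ ⊥}

/-- `V` is a weight module: it is the (direct) sum of its weight spaces. -/
def IsWeightModule : Prop := (⨆ χ : Module.Dual ℂ S.cartan, S.wtSpace V χ) = ⊤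

/-- All weight spaces are finite dimensional. -/
def HasFinDimWeightSpaces : Prop :=
  ∀ χ : Module.Dual ℂ S.cartan, FiniteDimensional ℂ (S.wtSpace V χ)

/-- Integrability: `V` is a weight module with finite dimensional weight spaces on which all
real root vectors `(x ⊗ tⁿ) ⊗ a`, `x ∈ g̊_α`, `α ∈ Δ̊`, act locally nilpotently. -/
def IsIntegrable : Prop :=
  S.IsWeightModule V ∧ S.HasFinDimWeightSpaces V ∧
    ∀ α : Module.Dual ℂ S.H, α ≠ 0 → S.rootSp α ≠ ⊥ →
      ∀ x ∈ S.rootSp α, ∀ (n : ℤ) (a : A) (v : V),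
        ∃ N : ℕ, ((LieModule.toEnd ℂ L V) (S.E n x a) ^ N) v = 0

/-- The highest weight space
`M = {v ∈ V : (x ⊗ tⁿ ⊗ a) v = 0 ∀ x ∈ g̊_α, α ∈ Δ̊₊, n ∈ ℤ, a ∈ A}` for the second
triangular decomposition. -/
def hwSpace : Submodule ℂ V where
  carrier := {v : V | ∀ α ∈ S.Δplus, ∀ x ∈ S.rootSp α, ∀ (n : ℤ) (a : A), ⁅S.E n x a, v⁆ = 0}
  add_mem' := by
    intro u w hu hw α hα x hx n a
    rw [lie_add, hu α hα x hx n a, hw α hα x hx n a, add_zero]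
  zero_mem' := by
    intro α hα x hx n a
    rw [lie_zero]
  smul_mem' := by
    intro t v hv α hα x hx n a
    rw [lie_smul, hv α hα x hx n a, smul_zero]

/-- Generators of `𝔏(A)⁺ = (n₊ ⊕ Vir⁺) ⊗ A` for the natural triangular decomposition. -/
def plusSet : Set L :=
  {z : L | ∃ n : ℤ, 0 < n ∧ ∃ (x : g) (a : A), z = S.E n x a} ∪
  {z : L | ∃ α ∈ S.Δplus, ∃ x ∈ S.rootSp α, ∃ a : A, z = S.E 0 x a} ∪
  {z : L | ∃ n : ℤ, 0 < n ∧ ∃ a : A, z = S.D n a}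

/-- Generators of `𝔏(A)⁻ = (n₋ ⊕ Vir⁻) ⊗ A` for the natural triangular decomposition. -/
def minusSet : Set L :=
  {z : L | ∃ n : ℤ, n < 0 ∧ ∃ (x : g) (a : A), z = S.E n x a} ∪
  {z : L | ∃ α ∈ S.Δplus, ∃ x ∈ S.rootSp (-α), ∃ a : A, z = S.E 0 x a} ∪
  {z : L | ∃ n : ℤ, n < 0 ∧ ∃ a : A, z = S.D n a}

/-- Generators of `𝔏(A)⁰ = h̄ ⊗ A`. -/
def cartanASet : Set L :=
  {z : L | ∃ h ∈ S.H, ∃ a : A, z = S.E 0 h a} ∪ {z : L | ∃ a : A, z = S.K a}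
    ∪ {z : L | ∃ a : A, z = S.D 0 a} ∪ {z : L | ∃ a : A, z = S.C a}

/-- `𝔏(A)⁰ = h̄ ⊗ A` as a subspace of `L`. -/
def cartanA : Submodule ℂ L := Submodule.span ℂ S.cartanASet

/-- `h ⊗ a`, `h ∈ h̊`, as an element of `h̄ ⊗ A`. -/
def eHA (h : S.H) (a : A) : S.cartanA :=
  ⟨S.E 0 h a, Submodule.subset_span
    (Set.mem_union_left _ (Set.mem_union_left _ (Set.mem_union_left _ ⟨(h : g), h.2, a, rfl⟩)))⟩

/-- `K ⊗ a` as an element of `h̄ ⊗ A`. -/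
def KA (a : A) : S.cartanA :=
  ⟨S.K a, Submodule.subset_span
    (Set.mem_union_left _ (Set.mem_union_left _ (Set.mem_union_right _ ⟨a, rfl⟩)))⟩

/-- `d₀ ⊗ a` as an element of `h̄ ⊗ A`. -/
def DA0 (a : A) : S.cartanA :=
  ⟨S.D 0 a, Submodule.subset_span (Set.mem_union_left _ (Set.mem_union_right _ ⟨a, rfl⟩))⟩

/-- `C ⊗ a` as an element of `h̄ ⊗ A`. -/
def CA (a : A) : S.cartanA :=
  ⟨S.C a, Submodule.subset_span (Set.mem_union_right _ ⟨a, rfl⟩)⟩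

/-- `V` is a highest weight module with highest weight `ψ : h̄ ⊗ A → ℂ` for the natural
triangular decomposition: some nonzero vector `v` is annihilated by `𝔏(A)⁺`, is a
`ψ`-eigenvector for `h̄ ⊗ A`, and generates `V`. -/
def IsHWModule (ψ : Module.Dual ℂ S.cartanA) : Prop :=
  ∃ v : V, v ≠ 0 ∧ (∀ z ∈ S.plusSet, ⁅z, v⁆ = 0) ∧
    (∀ h : S.cartanA, ⁅(h : L), v⁆ = ψ h • v) ∧
    ∀ W : LieSubmodule ℂ L V, v ∈ W → W = ⊤

/-- `(𝔏 ⊗ I) ⬝ V = 0`. -/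
def Annihilates (I : Ideal A) : Prop :=
  ∀ a ∈ I, (∀ (n : ℤ) (x : g) (v : V), ⁅S.E n x a, v⁆ = 0) ∧
    (∀ (n : ℤ) (v : V), ⁅S.D n a, v⁆ = 0) ∧
    (∀ v : V, ⁅S.K a, v⁆ = 0) ∧ (∀ v : V, ⁅S.C a, v⁆ = 0)

/-- `(𝔏₀ ⊗ R)` kills the subspace `X`, where `𝔏₀ = (h̊ ⊗ ℂ[t,t⁻¹] ⊕ ℂK) ⋊ Vir`. -/
def ZeroPartAnnOn (R : Ideal A) (X : Submodule ℂ V) : Prop :=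
  ∀ a ∈ R, ∀ v ∈ X,
    (∀ (n : ℤ) (h : g), h ∈ S.H → ⁅S.E n h a, v⁆ = 0) ∧
    (∀ n : ℤ, ⁅S.D n a, v⁆ = 0) ∧ ⁅S.K a, v⁆ = 0 ∧ ⁅S.C a, v⁆ = 0

/-- Generators of `𝔏(A)₀ = ((h̊ ⊗ ℂ[t,t⁻¹] ⊕ ℂK) ⋊ Vir) ⊗ A`. -/
def zeroPartSet : Set L :=
  {z : L | ∃ (n : ℤ) (h : g), h ∈ S.H ∧ ∃ a : A, z = S.E n h a}
    ∪ {z : L | ∃ a : A, z = S.K a}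
    ∪ {z : L | ∃ (n : ℤ) (a : A), z = S.D n a}
    ∪ {z : L | ∃ a : A, z = S.C a}

/-- Generators of `g(A) = (g̊ ⊗ ℂ[t,t⁻¹] ⊕ ℂK ⊕ ℂd₀) ⊗ A`. -/
def gASet : Set L :=
  {z : L | ∃ (n : ℤ) (x : g) (a : A), z = S.E n x a}
    ∪ {z : L | ∃ a : A, z = S.K a} ∪ {z : L | ∃ a : A, z = S.D 0 a}

/-- Generators of `(h̊ ⊗ ℂ[t,t⁻¹] ⊕ ℂK) ⊗ A`. -/
def heisSet : Set L :=
  {z : L | ∃ (n : ℤ) (h : g), h ∈ S.H ∧ ∃ a : A, z = S.E n h a}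
    ∪ {z : L | ∃ a : A, z = S.K a}

/-- The smallest subspace of `V` containing `X` and stable under the operators in `Ops`;
this models `U(⋯) ⬝ X`. -/
def opClosure (Ops : Set L) (X : Submodule ℂ V) : Submodule ℂ V :=
  sInf {N : Submodule ℂ V | X ≤ N ∧ ∀ z ∈ Ops, ∀ v ∈ N, ⁅z, v⁆ ∈ N}

/-- The reflection `λ ↦ λ - λ(b) • β` on `h̄*`. -/
def reflMap (b : S.cartan) (β : Module.Dual ℂ S.cartan) :
    Module.End ℂ (Module.Dual ℂ S.cartan) :=
  LinearMap.id - LinearMap.smulRight (Module.Dual.eval ℂ S.cartan b) β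

/-- Given `ν⁻¹ : h̊* → h̊` (inverse of the form), the coroot
`β∨ = α∨ + (2 / ⟨α,α⟩) K ∈ h̄` of the real root `β = α + nδ`. -/
def corootOf (nu : Module.Dual ℂ S.H → S.H) (α : Module.Dual ℂ S.H) : S.cartan :=
  (2 / α (nu α)) • (S.eH (nu α) + S.K1)

/-- The (affine) Weyl group `W` of `𝔏(A)`, generated by the reflections in the real
roots `β = α + nδ`, acting on `h̄*`. -/
def weylMonoid (nu : Module.Dual ℂ S.H → S.H)
    (ext : Module.Dual ℂ S.H →ₗ[ℂ] Module.Dual ℂ S.cartan)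
    (δf : Module.Dual ℂ S.cartan) :
    Submonoid (Module.End ℂ (Module.Dual ℂ S.cartan)) :=
  Submonoid.closure {w | ∃ (α : Module.Dual ℂ S.H) (n : ℤ), α ≠ 0 ∧ S.rootSp α ≠ ⊥ ∧
    w = S.reflMap (S.corootOf nu α) (ext α + (n : ℂ) • δf)}

/-- The reflection `σ_α : h ↦ h - α(h) • α∨` on `h̊`. -/
def finReflMap (nu : Module.Dual ℂ S.H → S.H) (α : Module.Dual ℂ S.H) :
    Module.End ℂ S.H :=
  LinearMap.id - LinearMap.smulRight (α : S.H →ₗ[ℂ] ℂ) ((2 / α (nu α)) • nu α)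

/-- The finite Weyl group `W̊` of `g̊`, acting on `h̊`. -/
def finWeyl (nu : Module.Dual ℂ S.H → S.H) : Submonoid (Module.End ℂ S.H) :=
  Submonoid.closure {w | ∃ α : Module.Dual ℂ S.H, α ≠ 0 ∧ S.rootSp α ≠ ⊥ ∧
    w = S.finReflMap nu α}

/-- `ℤ[W̊(θ∨)] ⊆ h̊`: the additive group generated by the `W̊`-orbit of `θ∨`. -/
def thetaOrbitSpan (nu : Module.Dual ℂ S.H → S.H) (θ : Module.Dual ℂ S.H) :
    AddSubgroup S.H :=
  AddSubgroup.closure {h | ∃ w ∈ S.finWeyl nu, h = w ((2 / θ (nu θ)) • nu θ)}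

/-- The `d₀`-eigenspace of `V` for the eigenvalue `μ`. -/
def d0Eig (μ : ℂ) : Submodule ℂ V where
  carrier := {v : V | ⁅S.D 0 1, v⁆ = μ • v}
  add_mem' := by
    intro a b ha hb
    show ⁅S.D 0 1, a + b⁆ = μ • (a + b)
    rw [lie_add, ha, hb, smul_add]
  zero_mem' := by
    show ⁅S.D 0 1, (0 : V)⁆ = μ • (0 : V)
    rw [lie_zero, smul_zero]
  smul_mem' := by
    intro c v hv
    show ⁅S.D 0 1, c • v⁆ = μ • c • v
    rw [lie_smul, hv, smul_comm]

end LoopAffVir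

end

namespace LoopAffVir

section Basic

variable {g A L : Type*} [LieRing g] [LieAlgebra ℂ g] [CommRing A] [Algebra ℂ A]
  [LieRing L] [LieAlgebra ℂ L] (S : LoopAffVir g A L)
  {V : Type*} [AddCommGroup V] [Module ℂ V] [LieRingModule L V] [LieModule ℂ L V]

lemma lie_E_lie_E (n m : ℤ) (x y : g) (a b : A) (v : V) :
    ⁅S.E n x a, ⁅S.E m y b, v⁆⁆ = ⁅S.E (n + m) ⁅x, y⁆ (a * b), v⁆
      + (if m = -n then (n : ℂ) * S.form x y else 0) • ⁅S.K (a * b), v⁆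
      + ⁅S.E m y b, ⁅S.E n x a, v⁆⁆ := by
  rw [leibniz_lie, S.lie_EE, add_lie, smul_lie]

lemma lie_D_lie_E (n m : ℤ) (x : g) (a b : A) (v : V) :
    ⁅S.D n a, ⁅S.E m x b, v⁆⁆ = (m : ℂ) • ⁅S.E (m + n) x (a * b), v⁆
      + ⁅S.E m x b, ⁅S.D n a, v⁆⁆ := by
  rw [leibniz_lie, S.lie_DE, smul_lie]

lemma lie_D_lie_D (n m : ℤ) (a b : A) (v : V) :
    ⁅S.D n a, ⁅S.D m b, v⁆⁆ = ((m : ℂ) - n) • ⁅S.D (n + m) (a * b), v⁆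
      + (if m = -n then (((n : ℂ) ^ 3 - (n : ℂ)) / 12) else 0) • ⁅S.C (a * b), v⁆
      + ⁅S.D m b, ⁅S.D n a, v⁆⁆ := by
  rw [leibniz_lie, S.lie_DD, add_lie, smul_lie, smul_lie]

omit [Module ℂ V] [LieModule ℂ L V] in
lemma lie_K_lie (a : A) (z : L) (v : V) : ⁅S.K a, ⁅z, v⁆⁆ = ⁅z, ⁅S.K a, v⁆⁆ := by
  rw [leibniz_lie, S.K_central, zero_lie, zero_add]

omit [Module ℂ V] [LieModule ℂ L V] in
lemma lie_C_lie (a : A) (z : L) (v : V) : ⁅S.C a, ⁅z, v⁆⁆ = ⁅z, ⁅S.C a, v⁆⁆ := by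
  rw [leibniz_lie, S.C_central, zero_lie, zero_add]

/-- A nonzero subspace of an irreducible module stable under all generators is everything. -/
lemma eq_top_of_stable [IsSimpleOrder (LieSubmodule ℂ L V)] (N : Submodule ℂ V)
    (hE : ∀ n x a, ∀ v ∈ N, ⁅S.E n x a, v⁆ ∈ N) (hD : ∀ n a, ∀ v ∈ N, ⁅S.D n a, v⁆ ∈ N)
    (hK : ∀ a, ∀ v ∈ N, ⁅S.K a, v⁆ ∈ N) (hC : ∀ a, ∀ v ∈ N, ⁅S.C a, v⁆ ∈ N)
    {v : V} (hv : v ∈ N) (hv0 : v ≠ 0) : N = ⊤ := by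
  have key : ∀ z : L, ∀ w ∈ N, ⁅z, w⁆ ∈ N := by
    intro z
    have hz : z ∈ (⊤ : Submodule ℂ L) := trivial
    rw [← S.span_top] at hz
    induction hz using Submodule.span_induction with
    | mem z hz =>
      rcases hz with ((⟨n, x, a, rfl⟩ | ⟨n, a, rfl⟩) | ⟨a, rfl⟩) | ⟨a, rfl⟩
      exacts [hE n x a, hD n a, hK a, hC a]
    | zero => intro w _; simp
    | add x y _ _ hx hy => intro w hw; rw [add_lie]; exact N.add_mem (hx w hw) (hy w hw)
    | smul c x _ hx => intro w hw; rw [smul_lie]; exact N.smul_mem c (hx w hw)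
  let P : LieSubmodule ℂ L V := { N with lie_mem := fun {z w} hw => key z w hw }
  have hP : P = ⊤ := by
    rcases eq_bot_or_eq_top P with h | h
    · have : v ∈ P := hv
      rw [h] at this
      exact absurd ((LieSubmodule.mem_bot v).1 this) hv0
    · exact h
  rw [eq_top_iff]
  intro w _
  have : w ∈ P := hP ▸ LieSubmodule.mem_top w
  exact this

variable (V) in
/-- The joint eigenspace of `h̊` and `d₀` in `V` for the eigenvalues `φ` and `μ`. -/
def jointEig (φ : Module.Dual ℂ S.H) (μ : ℂ) : Submodule ℂ V where
  carrier := {v : V | (∀ h : S.H, ⁅S.E 0 h 1, v⁆ = φ h • v) ∧ ⁅S.D 0 1, v⁆ = μ • v}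
  add_mem' := by
    rintro a b ⟨ha, ha'⟩ ⟨hb, hb'⟩
    exact ⟨fun h => by rw [lie_add, ha, hb, smul_add], by rw [lie_add, ha', hb', smul_add]⟩
  zero_mem' := ⟨fun h => by simp, by simp⟩
  smul_mem' := by
    rintro c v ⟨hv, hv'⟩
    exact ⟨fun h => by rw [lie_smul, hv, smul_comm], by rw [lie_smul, hv', smul_comm]⟩

lemma lie_E_mem_jointEig {α φ : Module.Dual ℂ S.H} {μ : ℂ} {x : g} (hx : x ∈ S.rootSp α) {v : V}
    (hv : v ∈ S.jointEig V φ μ) (k : ℤ) (a : A) :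
    ⁅S.E k x a, v⁆ ∈ S.jointEig V (φ + α) (μ + k) := by
  obtain ⟨h1, h2⟩ := hv
  refine ⟨fun h => ?_, ?_⟩
  · rw [lie_E_lie_E, h1, (S.rootSp_def α x).1 hx h]
    simp [add_smul, add_comm]
  · rw [lie_D_lie_E, h2]
    simp [add_smul, add_comm]

lemma lie_D_mem_jointEig {φ : Module.Dual ℂ S.H} {μ : ℂ} {v : V}
    (hv : v ∈ S.jointEig V φ μ) (k : ℤ) (a : A) :
    ⁅S.D k a, v⁆ ∈ S.jointEig V φ (μ + k) := by
  obtain ⟨h1, h2⟩ := hv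
  refine ⟨fun h => ?_, ?_⟩
  · have := S.lie_D_lie_E k 0 h a 1 v
    rw [h1] at this
    rw [← sub_eq_iff_eq_add'] at this
    simp only [Int.cast_zero, zero_smul, sub_zero] at this
    rw [← this, lie_smul]
  · rw [lie_D_lie_D, h2]
    simp [add_smul, add_comm]

variable (V) in
lemma iSup_jointEig (hW : S.IsWeightModule V) :
    ⨆ p : Module.Dual ℂ S.H × ℂ, S.jointEig V p.1 p.2 = ⊤ := by
  rw [eq_top_iff, ← show _ = _ from hW]
  refine iSup_le fun χ => ?_
  let φ : Module.Dual ℂ S.H :=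
    { toFun := fun h => χ (S.eH h)
      map_add' := fun x y => by
        rw [← map_add]; congr 1; ext; simp [eH]
      map_smul' := fun c x => by
        rw [RingHom.id_apply, ← map_smul]; congr 1; ext; simp [eH] }
  refine le_trans ?_ (le_iSup _ (φ, χ S.d0))
  intro v hv
  exact ⟨fun h => hv (S.eH h), hv S.d0⟩

variable (V) in
lemma exists_jointEig_ne_bot [IsSimpleOrder (LieSubmodule ℂ L V)] (hW : S.IsWeightModule V) :
    ∃ φ μ, S.jointEig V φ μ ≠ ⊥ := by
  by_contra! h
  have h1 := S.iSup_jointEig V hW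
  simp only [h, iSup_bot] at h1
  apply (bot_ne_top : (⊥ : LieSubmodule ℂ L V) ≠ ⊤)
  rw [← LieSubmodule.toSubmodule_inj]
  simpa using h1

variable (V) in
lemma exists_C_one_smul [IsSimpleOrder (LieSubmodule ℂ L V)] (hW : S.IsWeightModule V) :
    ∃ c : ℂ, ∀ v : V, ⁅S.C 1, v⁆ = c • v := by
  obtain ⟨χ, hχ⟩ : ∃ χ, S.wtSpace V χ ≠ ⊥ := by
    by_contra! h
    have h1 : (⨆ χ, S.wtSpace V χ) = ⊤ := hW
    simp only [h, iSup_bot] at h1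
    apply (bot_ne_top : (⊥ : LieSubmodule ℂ L V) ≠ ⊤)
    rw [← LieSubmodule.toSubmodule_inj]
    simpa using h1
  obtain ⟨v, hv, hv0⟩ := (Submodule.ne_bot_iff _).1 hχ
  have hst : ∀ z : L, ∀ w ∈ Module.End.eigenspace (LieModule.toEnd ℂ L V (S.C 1)) (χ S.C1),
      ⁅z, w⁆ ∈ Module.End.eigenspace (LieModule.toEnd ℂ L V (S.C 1)) (χ S.C1) := by
    intro z w hw
    rw [Module.End.mem_eigenspace_iff, LieModule.toEnd_apply_apply] at hw ⊢
    rw [lie_C_lie, hw, lie_smul]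
  have := S.eq_top_of_stable _ (fun n x a => hst _) (fun n a => hst _) (fun a => hst _)
    (fun a => hst _) (v := v) (by
      rw [Module.End.mem_eigenspace_iff, LieModule.toEnd_apply_apply]
      exact hv S.C1) hv0
  refine ⟨χ S.C1, fun w => ?_⟩
  have hw : w ∈ (⊤ : Submodule ℂ V) := trivial
  rw [← this, Module.End.mem_eigenspace_iff, LieModule.toEnd_apply_apply] at hw
  exact hw

lemma finiteDimensional_jointEig [IsSimpleOrder (LieSubmodule ℂ L V)] (hW : S.IsWeightModule V)
    (hF : S.HasFinDimWeightSpaces V) (hK0 : ∀ v : V, ⁅S.K 1, v⁆ = 0)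
    (φ : Module.Dual ℂ S.H) (μ : ℂ) : FiniteDimensional ℂ (S.jointEig V φ μ) := by
  obtain ⟨c, hc⟩ := S.exists_C_one_smul V hW
  by_cases hb : S.jointEig V φ μ = ⊥
  · rw [hb]; infer_instance
  obtain ⟨v, hv, hv0⟩ := (Submodule.ne_bot_iff _).1 hb
  have key : ∀ z ∈ S.cartan, ∃ s : ℂ, ∀ w ∈ S.jointEig V φ μ, ⁅z, w⁆ = s • w := by
    intro z hz
    induction hz using Submodule.span_induction with
    | mem z hz =>
      rcases hz with ⟨h, hh, rfl⟩ | hz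
      · exact ⟨φ ⟨h, hh⟩, fun w hw => hw.1 ⟨h, hh⟩⟩
      · rcases hz with rfl | rfl | rfl
        · exact ⟨0, fun w _ => by rw [hK0, zero_smul]⟩
        · exact ⟨μ, fun w hw => hw.2⟩
        · exact ⟨c, fun w _ => hc w⟩
    | zero => exact ⟨0, fun w _ => by simp⟩
    | add x y _ _ hx hy =>
      obtain ⟨s, hs⟩ := hx
      obtain ⟨t, ht⟩ := hy
      exact ⟨s + t, fun w hw => by rw [add_lie, hs w hw, ht w hw, add_smul]⟩
    | smul r x _ hx =>
      obtain ⟨s, hs⟩ := hx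
      exact ⟨r * s, fun w hw => by rw [smul_lie, hs w hw, mul_smul]⟩
  choose s hs using fun z : S.cartan => key z z.2
  have hinj : Function.Injective fun r : ℂ => r • v := smul_left_injective ℂ hv0
  let χ : Module.Dual ℂ S.cartan :=
    { toFun := s
      map_add' := fun x y => hinj <| by
        simp only [add_smul, ← hs _ v hv, Submodule.coe_add, add_lie]
      map_smul' := fun r x => hinj <| by
        simp only [smul_eq_mul, mul_smul, RingHom.id_apply, ← hs _ v hv, Submodule.coe_smul,
          smul_lie] }
  have hle : S.jointEig V φ μ ≤ S.wtSpace V χ := fun w hw z => hs z w hw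
  have := hF χ
  exact Submodule.finiteDimensional_of_le hle

end Basic

section Root

variable {g A L : Type*} [LieRing g] [LieAlgebra ℂ g] [FiniteDimensional ℂ g]
  [LieAlgebra.IsSimple ℂ g] [CommRing A] [Algebra ℂ A]
  [LieRing L] [LieAlgebra ℂ L] (S : LoopAffVir g A L)

lemma mem_rootSpace_iff (α : Module.Dual ℂ S.H) (x : g) :
    haveI := S.isCartan
    x ∈ LieAlgebra.rootSpace S.H (α : S.H → ℂ) ↔ x ∈ S.rootSp α := by
  have := S.isCartan
  rw [S.rootSp_def]
  constructor
  · intro hx h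
    exact LieAlgebra.IsKilling.lie_eq_smul_of_mem_rootSpace hx h
  · intro hx
    exact LieModule.weightSpace_le_genWeightSpace g _ ((LieModule.mem_weightSpace _ _).2 hx)

lemma exists_finset_iSup_rootSp :
    ∃ Φ : Finset (Module.Dual ℂ S.H), 0 ∈ Φ ∧ ⨆ α ∈ Φ, S.rootSp α = ⊤ := by
  classical
  have := S.isCartan
  refine ⟨insert 0 (Finset.univ.image (LieModule.Weight.toLinear ℂ S.H g)), by simp, ?_⟩
  rw [eq_top_iff, ← LieSubmodule.iSup_toSubmodule_eq_top.2
    (LieModule.iSup_genWeightSpace_eq_top' ℂ S.H g)]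
  refine iSup_le fun χ => le_trans ?_
    (le_iSup₂_of_le (LieModule.Weight.toLinear ℂ S.H g χ) (by simp) le_rfl)
  intro x hx
  exact (S.mem_rootSpace_iff _ x).1 hx

lemma mem_rootSp_zero_iff (x : g) : x ∈ S.rootSp 0 ↔ x ∈ S.H := by
  have := S.isCartan
  rw [← S.mem_rootSpace_iff]
  have h := LieAlgebra.rootSpace_zero_eq ℂ g S.H
  change x ∈ LieAlgebra.rootSpace S.H 0 ↔ _
  rw [h]
  exact LieSubalgebra.mem_toLieSubmodule x

lemma exists_isSl2Triple {α : Module.Dual ℂ S.H} (h0 : α ≠ 0) (hα : S.rootSp α ≠ ⊥) :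
    ∃ h e f : g, IsSl2Triple h e f ∧ h ∈ S.H ∧ e ∈ S.rootSp α ∧ f ∈ S.rootSp (-α) ∧
      ∀ x ∈ S.rootSp α, ∃ c : ℂ, x = c • e := by
  have := S.isCartan
  obtain ⟨x, hx, hx0⟩ := (Submodule.ne_bot_iff _).1 hα
  have hne : LieModule.genWeightSpace g (α : S.H → ℂ) ≠ ⊥ := by
    intro hb
    have := (S.mem_rootSpace_iff α x).2 hx
    rw [show LieAlgebra.rootSpace S.H α = ⊥ from hb] at this
    exact hx0 (by simpa using this)
  let w : LieModule.Weight ℂ S.H g := ⟨α, hne⟩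
  have hw : w.IsNonZero := by
    intro h
    apply h0
    ext z
    exact congrFun h z
  obtain ⟨h, e, f, ht, he, hf⟩ := LieAlgebra.IsKilling.exists_isSl2Triple_of_weight_isNonZero hw
  have he' := (S.mem_rootSpace_iff α e).1 he
  have hf' : f ∈ S.rootSp (-α) := (S.mem_rootSpace_iff (-α) f).1 hf
  refine ⟨h, e, f, ht, ?_, he', hf', ?_⟩
  · rw [← S.mem_rootSp_zero_iff, S.rootSp_def, ← ht.lie_e_f]
    intro z
    rw [leibniz_lie, (S.rootSp_def _ _).1 he', (S.rootSp_def _ _).1 hf']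
    simp
  · intro x hx
    have h1 := LieAlgebra.IsKilling.finrank_rootSpace_eq_one w hw
    obtain ⟨c, hc⟩ := (finrank_eq_one_iff_of_nonzero' (⟨e, he⟩ : LieAlgebra.rootSpace S.H w)
      (by simpa using ht.e_ne_zero)).1 h1 ⟨x, (S.mem_rootSpace_iff α x).2 hx⟩
    exact ⟨c, by simpa using (congrArg Subtype.val hc).symm⟩

omit [FiniteDimensional ℂ g] in
variable (g) in
lemma span_lie_eq_top : Submodule.span ℂ {z : g | ∃ x y : g, ⁅x, y⁆ = z} = ⊤ := by
  rcases LieAlgebra.IsSimple.eq_bot_or_eq_top (R := ℂ) ⁅(⊤ : LieIdeal ℂ g), (⊤ : LieIdeal ℂ g)⁆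
    with h | h
  · rw [LieSubmodule.lie_eq_bot_iff] at h
    exact absurd ⟨fun x y => h x (LieSubmodule.mem_top x) y (LieSubmodule.mem_top y)⟩
      (LieAlgebra.IsSimple.non_abelian ℂ (L := g))
  · rw [← LieSubmodule.toSubmodule_inj, LieSubmodule.lieIdeal_oper_eq_linear_span'] at h
    simpa using h

end Root

section Ideals

variable {A : Type*} [CommRing A] [Algebra ℂ A]

lemma pow_eq_bot_of_finrank_le [FiniteDimensional ℂ A] {J : Ideal A} {e N : ℕ}
    (hN : Module.finrank ℂ A ≤ N) (he : J ^ e = ⊥) : J ^ N = ⊥ := by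
  have key : ∀ j, J ^ j = ⊥ ∨
      Module.finrank ℂ ((J ^ j).restrictScalars ℂ) + j ≤ Module.finrank ℂ A := by
    intro j
    induction j with
    | zero => exact .inr (Submodule.finrank_le _)
    | succ j ih =>
      by_cases hj : J ^ (j + 1) = ⊥
      · exact .inl hj
      right
      have hle : J ^ (j + 1) ≤ J ^ j := Ideal.pow_le_pow_right j.le_succ
      rcases ih with h | h
      · exact absurd (le_bot_iff.1 (hle.trans h.le)) hj
      have hne : J ^ (j + 1) ≠ J ^ j := by
        intro h
        have h2 : ∀ m, J ^ (j + m) = J ^ j := by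
          intro m
          induction m with
          | zero => rfl
          | succ m ih => rw [← add_assoc, pow_succ, ih, ← pow_succ, h]
        exact hj (h.trans ((h2 e).symm.trans (by rw [pow_add, he, Ideal.mul_bot])))
      have hlt : (J ^ (j + 1)).restrictScalars ℂ < (J ^ j).restrictScalars ℂ :=
        lt_of_le_of_ne hle fun h => hne (Submodule.restrictScalars_injective ℂ A A h)
      have := Submodule.finrank_lt_finrank_of_lt hlt
      lia
  rcases key N with h | h
  · exact h
  · have h0 : Module.finrank ℂ ((J ^ N).restrictScalars ℂ) = 0 := by lia
    have := Submodule.finrank_eq_zero.1 h0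
    exact (Submodule.restrictScalars_eq_bot_iff ℂ A A).1 this

lemma pow_le_of_finrank_le {Q I : Ideal A} {e N : ℕ} [FiniteDimensional ℂ (A ⧸ Q)]
    (hN : Module.finrank ℂ (A ⧸ Q) ≤ N) (he : I ^ e ≤ Q) : I ^ N ≤ Q := by
  have h : ∀ n, I ^ n ≤ Q ↔ I.map (Ideal.Quotient.mk Q) ^ n = ⊥ := by
    intro n
    rw [← Ideal.map_pow, Ideal.map_eq_bot_iff_le_ker, Ideal.mk_ker]
  rw [h] at he ⊢
  exact pow_eq_bot_of_finrank_le hN he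

lemma isCofiniteIdeal_of_le {I J : Ideal A} (h : I ≤ J) (hI : IsCofiniteIdeal I) :
    IsCofiniteIdeal J :=
  Submodule.CoFG.of_le (R := ℂ) (S := I.restrictScalars ℂ) (T := J.restrictScalars ℂ) h hI

lemma isCofiniteIdeal_inf {I J : Ideal A} (hI : IsCofiniteIdeal I) (hJ : IsCofiniteIdeal J) :
    IsCofiniteIdeal (I ⊓ J) :=
  Submodule.CoFG.inf (R := ℂ) (S := I.restrictScalars ℂ) (T := J.restrictScalars ℂ) hI hJ

lemma isCofiniteIdeal_iff_exists_fg {I : Ideal A} :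
    IsCofiniteIdeal I ↔ ∃ F : Submodule ℂ A, F.FG ∧ F ⊔ I.restrictScalars ℂ = ⊤ := by
  constructor
  · intro h
    obtain ⟨F, hF⟩ := Submodule.exists_isCompl (I.restrictScalars ℂ)
    exact ⟨F, Submodule.CoFG.fg_of_isCompl hF h, hF.symm.sup_eq_top⟩
  · rintro ⟨F, hF, h⟩
    exact Submodule.FG.cofg_of_codisjoint (T := I.restrictScalars ℂ) (codisjoint_iff.2 h) hF

lemma isCofiniteIdeal_mul [Algebra.FiniteType ℂ A] {I J : Ideal A} (hI : IsCofiniteIdeal I)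
    (hJ : IsCofiniteIdeal J) : IsCofiniteIdeal (I * J) := by
  classical
  have : IsNoetherianRing A := Algebra.FiniteType.isNoetherianRing ℂ A
  obtain ⟨s, hs⟩ := IsNoetherian.noetherian I
  rw [isCofiniteIdeal_iff_exists_fg] at *
  obtain ⟨F, hF, hFI⟩ := hI
  obtain ⟨G, hG, hGJ⟩ := hJ
  refine ⟨F ⊔ Submodule.span ℂ (s : Set A) * G, hF.sup ((Submodule.fg_span s.finite_toSet).mul hG),
    ?_⟩
  rw [eq_top_iff, ← hFI, sup_assoc]
  refine sup_le_sup_left ?_ _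
  intro x hx
  replace hx : x ∈ I := hx
  rw [← hs, Submodule.mem_span_finset] at hx
  obtain ⟨f, -, rfl⟩ := hx
  refine Submodule.sum_mem _ fun a ha => ?_
  have hf : f a ∈ G ⊔ J.restrictScalars ℂ := hGJ ▸ Submodule.mem_top
  obtain ⟨y, hy, z, hz, hyz⟩ := Submodule.mem_sup.1 hf
  rw [← hyz, smul_eq_mul, mul_comm _ a, mul_add]
  refine Submodule.add_mem_sup (Submodule.mul_mem_mul (Submodule.subset_span ha) hy) ?_
  exact Ideal.mul_mem_mul (hs ▸ Submodule.subset_span ha) hz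

lemma isCofiniteIdeal_pow [Algebra.FiniteType ℂ A] {I : Ideal A} (hI : IsCofiniteIdeal I)
    (n : ℕ) : IsCofiniteIdeal (I ^ n) := by
  induction n with
  | zero =>
    rw [pow_zero, Ideal.one_eq_top]
    exact isCofiniteIdeal_of_le le_top hI
  | succ n ih => exact pow_succ I n ▸ isCofiniteIdeal_mul ih hI

lemma finrank_quotient_le_of_ker_le {M : Type*} [AddCommGroup M] [Module ℂ M]
    [FiniteDimensional ℂ M] {I : Ideal A} (T : A →ₗ[ℂ] M)
    (hT : LinearMap.ker T ≤ I.restrictScalars ℂ) :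
    IsCofiniteIdeal I ∧ Module.finrank ℂ (A ⧸ I) ≤ Module.finrank ℂ M := by
  have hcof : (LinearMap.ker T).CoFG := Submodule.CoFG.ker T
  have : FiniteDimensional ℂ (A ⧸ LinearMap.ker T) := hcof
  refine ⟨Submodule.CoFG.of_le hT hcof, ?_⟩
  rw [← (Submodule.Quotient.restrictScalarsEquiv ℂ I).finrank_eq]
  have h1 := LinearMap.finrank_le_finrank_of_surjective (f := Submodule.factor hT)
    (Submodule.factor_surjective hT)
  have h2 := T.quotKerEquivRange.finrank_eq
  have h3 := Submodule.finrank_le (LinearMap.range T)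
  lia

lemma finrank_quotient_le_of_ker_le' {G W Y : Type*} [AddCommGroup G] [Module ℂ G]
    [AddCommGroup W] [Module ℂ W] [AddCommGroup Y] [Module ℂ Y] [FiniteDimensional ℂ G]
    [FiniteDimensional ℂ W] [FiniteDimensional ℂ Y] {I : Ideal A} (T : A →ₗ[ℂ] G →ₗ[ℂ] W →ₗ[ℂ] Y)
    (hT : LinearMap.ker T ≤ I.restrictScalars ℂ) :
    IsCofiniteIdeal I ∧ Module.finrank ℂ (A ⧸ I) ≤
      Module.finrank ℂ G * (Module.finrank ℂ W * Module.finrank ℂ Y) := by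
  have h := finrank_quotient_le_of_ker_le T hT
  refine ⟨h.1, h.2.trans ?_⟩
  rw [Module.finrank_linearMap ℂ ℂ G, Module.finrank_linearMap ℂ ℂ W Y]

lemma finrank_biSup_le {ι M : Type*} [AddCommGroup M] [Module ℂ M] (Φ : Finset ι)
    (W : ι → Submodule ℂ M) [∀ i, FiniteDimensional ℂ (W i)] :
    Module.finrank ℂ (⨆ i ∈ Φ, W i : Submodule ℂ M) ≤ ∑ i ∈ Φ, Module.finrank ℂ (W i) := by
  classical
  induction Φ using Finset.induction_on with
  | empty =>
    have h : (⨆ i ∈ (∅ : Finset ι), W i) = ⊥ := by simp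
    rw [h, finrank_bot]
    exact Nat.zero_le _
  | insert i Φ hi ih =>
    rw [Finset.iSup_insert, Finset.sum_insert hi]
    have : FiniteDimensional ℂ (⨆ i ∈ Φ, W i : Submodule ℂ M) :=
      Submodule.finiteDimensional_finset_sup Φ W |> fun h => by rwa [Finset.sup_eq_iSup] at h
    exact (Submodule.finrank_add_le_finrank_add_finrank _ _).trans (Nat.add_le_add_left ih _)

end Ideals

section Kills

variable {g A L : Type*} [LieRing g] [LieAlgebra ℂ g] [CommRing A] [Algebra ℂ A]
  [LieRing L] [LieAlgebra ℂ L] (S : LoopAffVir g A L)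
  {V : Type*} [AddCommGroup V] [Module ℂ V] [LieRingModule L V] [LieModule ℂ L V]

/-- All the elements `d_k ⊗ a` and `x ⊗ t^k ⊗ a` kill `v`. -/
def Kills (k : ℤ) (a : A) (v : V) : Prop :=
  ⁅S.D k a, v⁆ = 0 ∧ ∀ x, ⁅S.E k x a, v⁆ = 0

variable {S}

omit [Module ℂ V] [LieModule ℂ L V] in
lemma Kills.add {k : ℤ} {a b : A} {v : V} (ha : S.Kills k a v) (hb : S.Kills k b v) :
    S.Kills k (a + b) v :=
  ⟨by rw [map_add, add_lie, ha.1, hb.1, add_zero],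
    fun x => by rw [map_add, add_lie, ha.2, hb.2, add_zero]⟩

omit [Module ℂ V] [LieModule ℂ L V] in
variable (S) in
lemma kills_zero (k : ℤ) (v : V) : S.Kills k 0 v := ⟨by simp, fun x => by simp⟩

lemma Kills.lie_D {m k : ℤ} {a b : A} {v : V} (ha : ⁅S.D m a, v⁆ = 0) (hb : ⁅S.D k b, v⁆ = 0)
    (hmk : m ≠ k) (h0 : m + k ≠ 0) : ⁅S.D (m + k) (a * b), v⁆ = 0 := by
  have h := S.lie_D_lie_D m k a b v
  rw [ha, hb, lie_zero, lie_zero, add_zero, if_neg (by lia), zero_smul, add_zero] at h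
  exact (smul_eq_zero.1 h.symm).resolve_left
    (sub_ne_zero.2 fun h => hmk (by exact_mod_cast h.symm))

lemma Kills.mul {m k : ℤ} {a b : A} {v : V} (ha : ⁅S.D m a, v⁆ = 0) (hb : S.Kills k b v)
    (hk : k ≠ 0) (hmk : m ≠ k) (h0 : m + k ≠ 0) : S.Kills (m + k) (a * b) v := by
  refine ⟨Kills.lie_D ha hb.1 hmk h0, fun x => ?_⟩
  have h := S.lie_D_lie_E m k x a b v
  rw [ha, hb.2, lie_zero, lie_zero, add_zero, add_comm k] at h
  exact (smul_eq_zero.1 h.symm).resolve_left (by exact_mod_cast hk)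

variable (S) (V) in
/-- The ideal of all `a` such that every `d_k ⊗ a` and `x ⊗ t^k ⊗ a` kill a joint eigenspace. -/
def annIdeal (k : ℤ) (hk : k ≠ 0) (φ : Module.Dual ℂ S.H) (μ : ℂ) : Ideal A where
  carrier := {a | ∀ v ∈ S.jointEig V φ μ, S.Kills k a v}
  add_mem' ha hb v hv := (ha v hv).add (hb v hv)
  zero_mem' v _ := S.kills_zero k v
  smul_mem' := by
    intro c a ha v hv
    have hc : ⁅S.D 0 c, v⁆ ∈ S.jointEig V φ μ := by
      simpa using S.lie_D_mem_jointEig hv 0 c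
    refine ⟨?_, fun x => ?_⟩
    · have h := S.lie_D_lie_D 0 k c a v
      rw [(ha _ hv).1, (ha _ hc).1, lie_zero, add_zero, if_neg (by lia), zero_smul, add_zero,
        zero_add] at h
      exact (smul_eq_zero.1 h.symm).resolve_left (by simpa using hk)
    · have h := S.lie_D_lie_E 0 k x c a v
      rw [(ha _ hv).2, (ha _ hc).2, lie_zero, add_zero, add_zero] at h
      exact (smul_eq_zero.1 h.symm).resolve_left (by simpa using hk)

lemma mem_annIdeal {k : ℤ} {hk : k ≠ 0} {φ : Module.Dual ℂ S.H} {μ : ℂ} {a : A} :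
    a ∈ S.annIdeal V k hk φ μ ↔ ∀ v ∈ S.jointEig V φ μ, S.Kills k a v := Iff.rfl

variable (V) in
lemma annIdeal_mul_le {m k : ℤ} (hm : m ≠ 0) (hk : k ≠ 0) (hmk : m ≠ k) (h0 : m + k ≠ 0)
    (φ : Module.Dual ℂ S.H) (μ : ℂ) :
    S.annIdeal V m hm φ μ * S.annIdeal V k hk φ μ ≤ S.annIdeal V (m + k) h0 φ μ := by
  rw [Ideal.mul_le]
  intro a ha b hb v hv
  exact Kills.mul (ha v hv).1 (hb v hv) hk hmk h0

variable (V) in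
lemma pow_le_annIdeal {ε : ℤ} (hε : ε ≠ 0) (h2 : 2 * ε ≠ 0) (φ : Module.Dual ℂ S.H) (μ : ℂ)
    (k : ℕ) (hk : (k + 1) * ε ≠ 0) :
    (S.annIdeal V ε hε φ μ ⊓ S.annIdeal V (2 * ε) h2 φ μ) ^ (k + 1) ≤
      S.annIdeal V ((k + 1) * ε) hk φ μ := by
  have cast : ∀ {m n : ℤ} (h : m = n) (hm : m ≠ 0) (hn : n ≠ 0),
      S.annIdeal V m hm φ μ = S.annIdeal V n hn φ μ := by rintro m n rfl _ _; rfl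
  induction k with
  | zero =>
    rw [zero_add, pow_one, cast (show _ = ε by simp) hk hε]
    exact inf_le_left
  | succ k ih =>
    rcases Nat.eq_zero_or_pos k with rfl | hk0
    · rw [cast (show _ = 2 * ε by push_cast; ring) hk h2]
      exact (Ideal.pow_le_self (by lia)).trans inf_le_right
    · have h1 : ((k : ℤ) + 1) * ε ≠ 0 := mul_ne_zero (by lia) hε
      rw [pow_succ']
      refine (Ideal.mul_mono inf_le_left (ih h1)).trans ?_
      rw [cast (show _ = ε + (k + 1) * ε by push_cast; ring) hk
        (by rw [show ε + (k + 1) * ε = (k + 2) * ε by ring]; exact mul_ne_zero (by lia) hε)]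
      refine annIdeal_mul_le V hε h1 (fun h => ?_) _ φ μ
      have : (k : ℤ) * ε = 0 := by linear_combination -h
      exact mul_ne_zero (by lia) hε this

end Kills

section FinalStep

variable {g A L : Type*} [LieRing g] [LieAlgebra ℂ g]
  [LieAlgebra.IsSimple ℂ g] [CommRing A] [Algebra ℂ A]
  [LieRing L] [LieAlgebra ℂ L] {S : LoopAffVir g A L}
  {V : Type*} [AddCommGroup V] [Module ℂ V] [LieRingModule L V] [LieModule ℂ L V]

lemma kills_zero_mul {a b : A} {v : V} (ha : ∀ k ≠ 0, S.Kills k a v)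
    (hb : ∀ k ≠ 0, S.Kills k b v) :
    S.Kills 0 (a * b) v ∧ ⁅S.K (a * b), v⁆ = 0 ∧ ⁅S.C (a * b), v⁆ = 0 := by
  have hD : ∀ n : ℤ, n ≠ 0 → -(2 * n : ℂ) • ⁅S.D 0 (a * b), v⁆
      + (((n : ℂ) ^ 3 - n) / 12) • ⁅S.C (a * b), v⁆ = 0 := by
    intro n hn
    have h := S.lie_D_lie_D n (-n) a b v
    rw [(ha n hn).1, (hb (-n) (neg_ne_zero.2 hn)).1, lie_zero, lie_zero, if_pos rfl, add_zero,
      add_neg_cancel] at h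
    rw [h]
    congr 2
    push_cast
    ring
  have hE : ∀ n : ℤ, n ≠ 0 → ∀ x y, ⁅S.E 0 ⁅x, y⁆ (a * b), v⁆
      + ((n : ℂ) * S.form x y) • ⁅S.K (a * b), v⁆ = 0 := by
    intro n hn x y
    have h := S.lie_E_lie_E n (-n) x y a b v
    rw [(ha n hn).2, (hb (-n) (neg_ne_zero.2 hn)).2, lie_zero, lie_zero, if_pos rfl, add_zero,
      add_neg_cancel] at h
    exact h.symm
  have h1 := hD 1 one_ne_zero
  have hD0 : ⁅S.D 0 (a * b), v⁆ = 0 := by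
    norm_num at h1
    exact h1
  have hC : ⁅S.C (a * b), v⁆ = 0 := by
    have h2 := hD 2 two_ne_zero
    rw [hD0, smul_zero, zero_add] at h2
    exact (smul_eq_zero.1 h2).resolve_left (by norm_num)
  have hfK : ∀ x y, S.form x y • ⁅S.K (a * b), v⁆ = 0 := by
    intro x y
    have h1 := hE 1 one_ne_zero x y
    have h2 := hE 2 two_ne_zero x y
    rw [← sub_eq_zero.2 (h2.trans h1.symm)]
    push_cast
    module
  have hE0 : ∀ x, ⁅S.E 0 x (a * b), v⁆ = 0 := by
    intro x
    have hx : x ∈ Submodule.span ℂ {z : g | ∃ x y : g, ⁅x, y⁆ = z} :=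
      span_lie_eq_top g ▸ Submodule.mem_top
    induction hx using Submodule.span_induction with
    | mem z hz =>
      obtain ⟨x, y, rfl⟩ := hz
      have h1 := hE 1 one_ne_zero x y
      rwa [mul_smul, hfK, smul_zero, add_zero] at h1
    | zero => simp
    | add x y _ _ hx hy => rw [map_add, LinearMap.add_apply, add_lie, hx, hy, add_zero]
    | smul c x _ hx => rw [map_smul, LinearMap.smul_apply, smul_lie, hx, smul_zero]
  refine ⟨⟨hD0, hE0⟩, ?_, hC⟩
  by_contra hK
  have hf : ∀ x y, S.form x y = 0 := fun x y => (smul_eq_zero.1 (hfK x y)).resolve_right hK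
  refine LieAlgebra.IsSimple.non_abelian ℂ (L := g) ⟨fun x y => ?_⟩
  rw [S.form_nondeg x (hf x), zero_lie]

lemma annihilates_of_kills [IsSimpleOrder (LieSubmodule ℂ L V)] (J : Ideal A) {v : V} (hv : v ≠ 0)
    (hJ : ∀ a ∈ J, ∀ k ≠ 0, S.Kills k a v) : S.Annihilates V (J * J) := by
  let P : A → V → Prop := fun a u => (∀ n, S.Kills n a u) ∧ ⁅S.K a, u⁆ = 0 ∧ ⁅S.C a, u⁆ = 0
  let N : Submodule ℂ V :=
    { carrier := {u | ∀ a ∈ J * J, P a u}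
      add_mem' := fun {u w} hu hw a ha => by
        obtain ⟨h1, h2, h3⟩ := hu a ha
        obtain ⟨h1', h2', h3'⟩ := hw a ha
        exact ⟨fun n => ⟨by rw [lie_add, (h1 n).1, (h1' n).1, add_zero],
          fun x => by rw [lie_add, (h1 n).2, (h1' n).2, add_zero]⟩,
          by rw [lie_add, h2, h2', add_zero], by rw [lie_add, h3, h3', add_zero]⟩
      zero_mem' := fun a _ => ⟨fun n => ⟨lie_zero _, fun x => lie_zero _⟩, lie_zero _, lie_zero _⟩
      smul_mem' := fun c u hu a ha => by
        obtain ⟨h1, h2, h3⟩ := hu a ha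
        exact ⟨fun n => ⟨by rw [lie_smul, (h1 n).1, smul_zero],
          fun x => by rw [lie_smul, (h1 n).2, smul_zero]⟩,
          by rw [lie_smul, h2, smul_zero], by rw [lie_smul, h3, smul_zero]⟩ }
  have hvN : v ∈ N := by
    intro a ha
    refine Submodule.mul_induction_on ha (fun a ha b hb => ?_) (fun a b ha hb => ?_)
    · obtain ⟨h1, h2, h3⟩ := kills_zero_mul (hJ a ha) (hJ b hb)
      refine ⟨fun n => ?_, h2, h3⟩
      rcases eq_or_ne n 0 with rfl | hn
      · exact h1
      · exact hJ _ (J.mul_mem_right b ha) n hn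
    · obtain ⟨h1, h2, h3⟩ := ha
      obtain ⟨h1', h2', h3'⟩ := hb
      exact ⟨fun n => (h1 n).add (h1' n), by rw [map_add, add_lie, h2, h2', add_zero],
        by rw [map_add, add_lie, h3, h3', add_zero]⟩
  have hN : N = ⊤ := by
    refine S.eq_top_of_stable N ?_ ?_ ?_ ?_ hvN hv
    · intro m y b u hu a ha
      obtain ⟨h1, h2, h3⟩ := hu a ha
      obtain ⟨h1', h2', h3'⟩ := hu (a * b) ((J * J).mul_mem_right b ha)
      refine ⟨fun n => ⟨?_, fun x => ?_⟩, ?_, ?_⟩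
      · rw [lie_D_lie_E, (h1' _).2, (h1 _).1]; simp
      · rw [lie_E_lie_E, (h1' _).2, (h1 _).2, h2']; simp
      · rw [lie_K_lie, h2, lie_zero]
      · rw [lie_C_lie, h3, lie_zero]
    · intro m b u hu a ha
      obtain ⟨h1, h2, h3⟩ := hu a ha
      obtain ⟨h1', h2', h3'⟩ := hu (b * a) ((J * J).mul_mem_left b ha)
      refine ⟨fun n => ⟨?_, fun x => ?_⟩, ?_, ?_⟩
      · rw [lie_D_lie_D, mul_comm a b, (h1' _).1, (h1 _).1, h3']; simp
      · have := S.lie_D_lie_E m n x b a u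
        rw [(h1' _).2, (h1 _).2, lie_zero, smul_zero, zero_add] at this
        exact this.symm
      · rw [lie_K_lie, h2, lie_zero]
      · rw [lie_C_lie, h3, lie_zero]
    · intro b u hu a ha
      obtain ⟨h1, h2, h3⟩ := hu a ha
      refine ⟨fun n => ⟨?_, fun x => ?_⟩, ?_, ?_⟩
      · rw [← lie_K_lie, (h1 n).1, lie_zero]
      · rw [← lie_K_lie, (h1 n).2, lie_zero]
      · rw [lie_K_lie, h2, lie_zero]
      · rw [lie_C_lie, h3, lie_zero]
    · intro b u hu a ha
      obtain ⟨h1, h2, h3⟩ := hu a ha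
      refine ⟨fun n => ⟨?_, fun x => ?_⟩, ?_, ?_⟩
      · rw [← lie_C_lie, (h1 n).1, lie_zero]
      · rw [← lie_C_lie, (h1 n).2, lie_zero]
      · rw [lie_K_lie, h2, lie_zero]
      · rw [lie_C_lie, h3, lie_zero]
  have h : ∀ a ∈ J * J, ∀ u, P a u := fun a ha u => (hN ▸ Submodule.mem_top : u ∈ N) a ha
  exact fun a ha => ⟨fun n x u => ((h a ha u).1 n).2 x, fun n u => ((h a ha u).1 n).1,
    fun u => (h a ha u).2.1, fun u => (h a ha u).2.2⟩

lemma exists_annihilates_of_kills [IsSimpleOrder (LieSubmodule ℂ L V)] [Algebra.FiniteType ℂ A]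
    {J : Ideal A} (hJc : IsCofiniteIdeal J) {v : V} (hv : v ≠ 0)
    (hJ : ∀ a ∈ J, ∀ k ≠ 0, S.Kills k a v) :
    ∃ R : Ideal A, IsCofiniteIdeal R ∧ S.Annihilates V R :=
  ⟨J * J, isCofiniteIdeal_mul hJc hJc, annihilates_of_kills J hv hJ⟩

end FinalStep

section Dimension

variable {g A L : Type*} [LieRing g] [LieAlgebra ℂ g] [FiniteDimensional ℂ g]
  [CommRing A] [Algebra ℂ A]
  [LieRing L] [LieAlgebra ℂ L] (S : LoopAffVir g A L)
  {V : Type*} [AddCommGroup V] [Module ℂ V] [LieRingModule L V] [LieModule ℂ L V]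

variable (V) in
/-- The sum of the joint eigenspaces of `V` reached from `φ` by elements of `Φ`. -/
def nearEig (Φ : Finset (Module.Dual ℂ S.H)) (φ : Module.Dual ℂ S.H) (μ : ℂ) : Submodule ℂ V :=
  ⨆ α ∈ Φ, S.jointEig V (φ + α) μ

omit [FiniteDimensional ℂ g] in
lemma lie_E_mem_nearEig {Φ : Finset (Module.Dual ℂ S.H)} (hΦ : ⨆ α ∈ Φ, S.rootSp α = ⊤)
    {φ : Module.Dual ℂ S.H} {μ : ℂ} {v : V} (hv : v ∈ S.jointEig V φ μ) (k : ℤ) (x : g) (a : A) :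
    ⁅S.E k x a, v⁆ ∈ S.nearEig V Φ φ (μ + k) := by
  let f : g →ₗ[ℂ] V :=
    ((LieModule.toEnd ℂ L V : L →ₗ[ℂ] Module.End ℂ V).flip v) ∘ₗ ((S.E k).flip a)
  have h : ⨆ α ∈ Φ, S.rootSp α ≤ (S.nearEig V Φ φ (μ + k)).comap f :=
    iSup₂_le fun α hα x hx => (le_iSup₂_of_le α hα le_rfl :
      S.jointEig V (φ + α) (μ + k) ≤ _) (S.lie_E_mem_jointEig hx hv k a)
  exact h (hΦ ▸ Submodule.mem_top : x ∈ _)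

omit [FiniteDimensional ℂ g] in
lemma lie_D_mem_nearEig {Φ : Finset (Module.Dual ℂ S.H)} (hΦ0 : 0 ∈ Φ)
    {φ : Module.Dual ℂ S.H} {μ : ℂ} {v : V} (hv : v ∈ S.jointEig V φ μ) (k : ℤ) (a : A) :
    ⁅S.D k a, v⁆ ∈ S.nearEig V Φ φ (μ + k) :=
  (le_iSup₂_of_le 0 hΦ0 le_rfl : S.jointEig V (φ + 0) (μ + k) ≤ _)
    (by rw [add_zero]; exact S.lie_D_mem_jointEig hv k a)

omit [FiniteDimensional ℂ g] in
lemma finiteDimensional_nearEig (hfd : ∀ φ μ, FiniteDimensional ℂ (S.jointEig V φ μ))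
    (Φ : Finset (Module.Dual ℂ S.H)) (φ : Module.Dual ℂ S.H) (μ : ℂ) :
    FiniteDimensional ℂ (S.nearEig V Φ φ μ) := by
  have := Submodule.finiteDimensional_finset_sup Φ (fun α => S.jointEig V (φ + α) μ)
  rwa [Finset.sup_eq_iSup] at this

/-- The linear map `(x, c) ↦ a ↦ x ⊗ t^k ⊗ a + c • d_k ⊗ a`. -/
def gen (k : ℤ) : g × ℂ →ₗ[ℂ] A →ₗ[ℂ] L :=
  (S.E k).coprod (LinearMap.toSpanSingleton ℂ (A →ₗ[ℂ] L) (S.D k))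

omit [FiniteDimensional ℂ g] in
lemma gen_apply (k : ℤ) (q : g × ℂ) (a : A) : S.gen k q a = S.E k q.1 a + q.2 • S.D k a := by
  simp [gen]

omit [FiniteDimensional ℂ g] in
lemma kills_iff_gen {k : ℤ} {a : A} {v : V} : S.Kills k a v ↔ ∀ q, ⁅S.gen k q a, v⁆ = 0 := by
  constructor
  · rintro ⟨h1, h2⟩ q
    rw [gen_apply, add_lie, smul_lie, h1, h2, smul_zero, add_zero]
  · intro h
    exact ⟨by simpa [gen_apply] using h (0, 1), fun x => by simpa [gen_apply] using h (x, 0)⟩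

omit [FiniteDimensional ℂ g] in
lemma lie_gen_mem_nearEig {Φ : Finset (Module.Dual ℂ S.H)} (hΦ0 : 0 ∈ Φ)
    (hΦ : ⨆ α ∈ Φ, S.rootSp α = ⊤) {φ : Module.Dual ℂ S.H} {μ : ℂ} {v : V}
    (hv : v ∈ S.jointEig V φ μ) (k : ℤ) (q : g × ℂ) (a : A) :
    ⁅S.gen k q a, v⁆ ∈ S.nearEig V Φ φ (μ + k) := by
  rw [gen_apply, add_lie, smul_lie]
  exact add_mem (S.lie_E_mem_nearEig hΦ hv k _ a)
    (Submodule.smul_mem _ _ (S.lie_D_mem_nearEig hΦ0 hv k a))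

/-- The action of the elements of degree `k` with coefficients in `F`, restricted to a subspace `W`
of `V` and projected to `Y`. -/
def genAction (k : ℤ) {F : Type*} [AddCommGroup F] [Module ℂ F] (i : F →ₗ[ℂ] A)
    (W : Submodule ℂ V) {Y : Submodule ℂ V} (p : V →ₗ[ℂ] Y) :
    F →ₗ[ℂ] (g × ℂ) →ₗ[ℂ] W →ₗ[ℂ] Y :=
  LinearMap.mk₂ ℂ (fun a q => p ∘ₗ (LieModule.toEnd ℂ L V (S.gen k q (i a))) ∘ₗ W.subtype)
    (fun a b q => by ext; simp) (fun c a q => by ext; simp)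
    (fun a q r => by ext; simp) (fun c a q => by ext; simp)

omit [FiniteDimensional ℂ g] in
lemma genAction_apply (k : ℤ) {F : Type*} [AddCommGroup F] [Module ℂ F] (i : F →ₗ[ℂ] A)
    (W : Submodule ℂ V) {Y : Submodule ℂ V} (p : V →ₗ[ℂ] Y) (a : F) (q : g × ℂ) (v : W) :
    S.genAction k i W p a q v = p ⁅S.gen k q (i a), (v : V)⁆ := rfl

omit [FiniteDimensional ℂ g] in
lemma gen_eq_zero_of_genAction {k : ℤ} {F : Type*} [AddCommGroup F] [Module ℂ F]
    {i : F →ₗ[ℂ] A} {W Y : Submodule ℂ V} {p : V →ₗ[ℂ] Y}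
    (hp : p ∘ₗ Y.subtype = LinearMap.id) {a : F} {q : g × ℂ} {v : W}
    (hY : ⁅S.gen k q (i a), (v : V)⁆ ∈ Y) (h : S.genAction k i W p a q v = 0) :
    ⁅S.gen k q (i a), (v : V)⁆ = 0 := by
  have h1 := LinearMap.congr_fun hp ⟨_, hY⟩
  rw [LinearMap.comp_apply, Submodule.subtype_apply, ← genAction_apply, h] at h1
  exact (congrArg Subtype.val h1).symm

omit [FiniteDimensional ℂ g] in
lemma ker_genAction_le {Φ : Finset (Module.Dual ℂ S.H)} (hΦ0 : 0 ∈ Φ)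
    (hΦ : ⨆ α ∈ Φ, S.rootSp α = ⊤) {k : ℤ} (hk : k ≠ 0) {φ : Module.Dual ℂ S.H} {μ : ℂ}
    {p : V →ₗ[ℂ] S.nearEig V Φ φ (μ + k)}
    (hp : p ∘ₗ (S.nearEig V Φ φ (μ + k)).subtype = LinearMap.id) :
    LinearMap.ker (S.genAction k LinearMap.id (S.jointEig V φ μ) p) ≤
      (S.annIdeal V k hk φ μ).restrictScalars ℂ := by
  intro a ha v hv
  rw [kills_iff_gen]
  intro q
  refine S.gen_eq_zero_of_genAction hp (i := LinearMap.id) (a := a) (v := ⟨v, hv⟩)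
    (S.lie_gen_mem_nearEig hΦ0 hΦ hv k q a) ?_
  rw [LinearMap.mem_ker.1 ha]
  rfl

lemma finrank_quotient_annIdeal_le (hfd : ∀ φ μ, FiniteDimensional ℂ (S.jointEig V φ μ))
    {Φ : Finset (Module.Dual ℂ S.H)} (hΦ0 : 0 ∈ Φ) (hΦ : ⨆ α ∈ Φ, S.rootSp α = ⊤) (k : ℤ)
    (hk : k ≠ 0) (φ : Module.Dual ℂ S.H) (μ : ℂ) :
    IsCofiniteIdeal (S.annIdeal V k hk φ μ) ∧
    Module.finrank ℂ (A ⧸ S.annIdeal V k hk φ μ) ≤ (Module.finrank ℂ g + 1) *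
      (Module.finrank ℂ (S.jointEig V φ μ) *
        ∑ α ∈ Φ, Module.finrank ℂ (S.jointEig V (φ + α) (μ + k))) := by
  have := hfd φ μ
  have := S.finiteDimensional_nearEig hfd Φ φ (μ + k)
  obtain ⟨p, hp⟩ := (S.nearEig V Φ φ (μ + k)).subtype.exists_leftInverse_of_injective
    (Submodule.ker_subtype _)
  obtain ⟨hcof, hle⟩ := finrank_quotient_le_of_ker_le' _ (S.ker_genAction_le hΦ0 hΦ hk hp)
  refine ⟨hcof, hle.trans ?_⟩
  have h := finrank_biSup_le Φ fun α => S.jointEig V (φ + α) (μ + k)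
  rw [Module.finrank_prod, Module.finrank_self]
  exact Nat.mul_le_mul_left _ (Nat.mul_le_mul_left _ h)

end Dimension

section Bounded

variable {g A L : Type*} [LieRing g] [LieAlgebra ℂ g] [FiniteDimensional ℂ g]
  [LieAlgebra.IsSimple ℂ g] [CommRing A] [Algebra ℂ A] [Algebra.FiniteType ℂ A]
  [LieRing L] [LieAlgebra ℂ L] {S : LoopAffVir g A L}
  {V : Type*} [AddCommGroup V] [Module ℂ V] [LieRingModule L V] [LieModule ℂ L V]

lemma exists_annihilates_of_bounded [IsSimpleOrder (LieSubmodule ℂ L V)]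
    (hfd : ∀ φ μ, FiniteDimensional ℂ (S.jointEig V φ μ))
    {Φ : Finset (Module.Dual ℂ S.H)} (hΦ0 : 0 ∈ Φ) (hΦ : ⨆ α ∈ Φ, S.rootSp α = ⊤)
    {φ : Module.Dual ℂ S.H} {μ : ℂ} (hne : S.jointEig V φ μ ≠ ⊥) {B : ℕ}
    (hB : ∀ α ∈ Φ, ∀ n : ℤ, Module.finrank ℂ (S.jointEig V (φ + α) (μ + n)) ≤ B) :
    ∃ R : Ideal A, IsCofiniteIdeal R ∧ S.Annihilates V R := by
  obtain ⟨v, hv, hv0⟩ := (Submodule.ne_bot_iff _).1 hne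
  obtain ⟨N, hN⟩ : ∃ N : ℕ, ∀ k hk, Module.finrank ℂ (A ⧸ S.annIdeal V k hk φ μ) ≤ N := by
    refine ⟨_, fun k hk => (S.finrank_quotient_annIdeal_le hfd hΦ0 hΦ k hk φ μ).2.trans
      (Nat.mul_le_mul_left _ (Nat.mul_le_mul_left _
        (Finset.sum_le_card_nsmul Φ _ B fun α hα => hB α hα k)))⟩
  have hcof := fun k hk => (S.finrank_quotient_annIdeal_le hfd hΦ0 hΦ k hk φ μ).1
  have key : ∀ ε : ℤ, ∀ hε : ε ≠ 0, ∀ h2 : 2 * ε ≠ 0, ∀ a ∈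
      (S.annIdeal V ε hε φ μ ⊓ S.annIdeal V (2 * ε) h2 φ μ) ^ N, ∀ k : ℕ,
      S.Kills ((k + 1) * ε) a v := by
    intro ε hε h2 a ha k
    have hk : ((k : ℤ) + 1) * ε ≠ 0 := mul_ne_zero (by lia) hε
    have : FiniteDimensional ℂ (A ⧸ S.annIdeal V _ hk φ μ) := hcof _ hk
    exact pow_le_of_finrank_le (hN _ hk) (pow_le_annIdeal V hε h2 φ μ k hk) ha v hv
  refine exists_annihilates_of_kills (J :=
    (S.annIdeal V 1 (by decide) φ μ ⊓ S.annIdeal V (2 * 1) (by decide) φ μ) ^ N ⊓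
    (S.annIdeal V (-1) (by decide) φ μ ⊓ S.annIdeal V (2 * (-1)) (by decide) φ μ) ^ N)
    (isCofiniteIdeal_inf (isCofiniteIdeal_pow (isCofiniteIdeal_inf (hcof _ _) (hcof _ _)) _)
      (isCofiniteIdeal_pow (isCofiniteIdeal_inf (hcof _ _) (hcof _ _)) _)) hv0 ?_
  rintro a ⟨ha1, ha2⟩ k hk
  rcases lt_or_gt_of_ne hk with hk | hk
  · have := key (-1) (by decide) (by decide) a ha2 (-k - 1).toNat
    rwa [show (((-k - 1).toNat : ℤ) + 1) * (-1) = k by lia] at this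
  · have := key 1 (by decide) (by decide) a ha1 (k - 1).toNat
    rwa [show (((k - 1).toNat : ℤ) + 1) * 1 = k by lia] at this

end Bounded

section Unbounded

lemma exists_ne_zero_of_finrank_lt {F G W Y Z : Type*} [AddCommGroup F] [Module ℂ F]
    [AddCommGroup G] [Module ℂ G] [AddCommGroup W] [Module ℂ W] [AddCommGroup Y] [Module ℂ Y]
    [AddCommGroup Z] [Module ℂ Z] [FiniteDimensional ℂ F] [FiniteDimensional ℂ G]
    [FiniteDimensional ℂ W] [FiniteDimensional ℂ Y] [FiniteDimensional ℂ Z]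
    (T : F →ₗ[ℂ] G →ₗ[ℂ] W →ₗ[ℂ] Y) (U : F →ₗ[ℂ] G →ₗ[ℂ] W →ₗ[ℂ] Z)
    (h : Module.finrank ℂ F * (Module.finrank ℂ G * Module.finrank ℂ Y) +
      Module.finrank ℂ F * (Module.finrank ℂ G * Module.finrank ℂ Z) < Module.finrank ℂ W) :
    ∃ w : W, w ≠ 0 ∧ ∀ a q, T a q w = 0 ∧ U a q w = 0 := by
  let f : W →ₗ[ℂ] F →ₗ[ℂ] G →ₗ[ℂ] Y :=
    { toFun := fun w => T.compr₂ (LinearMap.applyₗ w)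
      map_add' := fun x y => by ext; simp
      map_smul' := fun c x => by ext; simp }
  let k : W →ₗ[ℂ] F →ₗ[ℂ] G →ₗ[ℂ] Z :=
    { toFun := fun w => U.compr₂ (LinearMap.applyₗ w)
      map_add' := fun x y => by ext; simp
      map_smul' := fun c x => by ext; simp }
  have hne : LinearMap.ker (f.prod k) ≠ ⊥ := by
    apply LinearMap.ker_ne_bot_of_finrank_lt
    rwa [Module.finrank_prod, Module.finrank_linearMap ℂ ℂ F, Module.finrank_linearMap ℂ ℂ G,
      Module.finrank_linearMap ℂ ℂ F, Module.finrank_linearMap ℂ ℂ G]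
  obtain ⟨w, hw, hw0⟩ := (Submodule.ne_bot_iff _).1 hne
  rw [LinearMap.ker_prod, Submodule.mem_inf] at hw
  refine ⟨w, hw0, fun a q => ⟨?_, ?_⟩⟩
  · exact LinearMap.congr_fun (LinearMap.congr_fun (LinearMap.mem_ker.1 hw.1) a) q
  · exact LinearMap.congr_fun (LinearMap.congr_fun (LinearMap.mem_ker.1 hw.2) a) q

variable {g A L : Type*} [LieRing g] [LieAlgebra ℂ g] [FiniteDimensional ℂ g]
  [CommRing A] [Algebra ℂ A]
  [LieRing L] [LieAlgebra ℂ L] {S : LoopAffVir g A L}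
  {V : Type*} [AddCommGroup V] [Module ℂ V] [LieRingModule L V] [LieModule ℂ L V]

lemma exists_kills_of_unbounded (hfd : ∀ φ μ, FiniteDimensional ℂ (S.jointEig V φ μ))
    {Φ : Finset (Module.Dual ℂ S.H)} (hΦ0 : 0 ∈ Φ) (hΦ : ⨆ α ∈ Φ, S.rootSp α = ⊤)
    {φ : Module.Dual ℂ S.H} {μ : ℂ}
    (hB : ∀ B : ℕ, ∃ n : ℕ, B < Module.finrank ℂ (S.jointEig V φ (μ - n)))
    (F : Submodule ℂ A) [FiniteDimensional ℂ F] :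
    ∃ n : ℕ, 1 ≤ n ∧ ∃ v ∈ S.jointEig V φ (μ - n), v ≠ 0 ∧
      ∀ f ∈ F, S.Kills n f v ∧ S.Kills (n + 1) f v := by
  have := S.finiteDimensional_nearEig hfd Φ φ μ
  have := S.finiteDimensional_nearEig hfd Φ φ (μ + 1)
  obtain ⟨p, hp⟩ := (S.nearEig V Φ φ μ).subtype.exists_leftInverse_of_injective
    (Submodule.ker_subtype _)
  obtain ⟨q, hq⟩ := (S.nearEig V Φ φ (μ + 1)).subtype.exists_leftInverse_of_injective
    (Submodule.ker_subtype _)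
  obtain ⟨n, hn⟩ := hB (Module.finrank ℂ F * (Module.finrank ℂ (g × ℂ) *
      Module.finrank ℂ (S.nearEig V Φ φ μ)) + Module.finrank ℂ F * (Module.finrank ℂ (g × ℂ) *
      Module.finrank ℂ (S.nearEig V Φ φ (μ + 1))) + Module.finrank ℂ (S.jointEig V φ μ))
  have hn1 : 1 ≤ n := by
    by_contra h0
    obtain rfl : n = 0 := by lia
    rw [Nat.cast_zero, sub_zero] at hn
    lia
  have := hfd φ (μ - n)
  obtain ⟨v, hv0, hv⟩ := exists_ne_zero_of_finrank_lt
    (S.genAction n F.subtype (S.jointEig V φ (μ - n)) p)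
    (S.genAction (n + 1) F.subtype (S.jointEig V φ (μ - n)) q) (by lia)
  refine ⟨n, hn1, v, v.2, by simpa using hv0, fun f hf => ⟨?_, ?_⟩⟩
  · rw [kills_iff_gen]
    refine fun r => S.gen_eq_zero_of_genAction hp (i := F.subtype) (a := ⟨f, hf⟩) ?_ (hv _ r).1
    have := S.lie_gen_mem_nearEig hΦ0 hΦ v.2 n r f
    simpa using this
  · rw [kills_iff_gen]
    refine fun r => S.gen_eq_zero_of_genAction hq (i := F.subtype) (a := ⟨f, hf⟩) ?_ (hv _ r).2
    have := S.lie_gen_mem_nearEig hΦ0 hΦ v.2 (n + 1) r f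
    rwa [show μ - n + ((n + 1 : ℤ) : ℂ) = μ + 1 by push_cast; ring] at this

omit [FiniteDimensional ℂ g]

lemma exists_lie_D_eq_zero {n : ℕ} (hn : 1 ≤ n) {v : V} (h1 : ⁅S.D n 1, v⁆ = 0)
    (h2 : ⁅S.D (n + 1) 1, v⁆ = 0) : ∃ k₀ : ℤ, ∀ k ≥ k₀, ⁅S.D k 1, v⁆ = 0 := by
  have hadd {m k : ℤ} (hm : ⁅S.D m 1, v⁆ = 0) (hk : ⁅S.D k 1, v⁆ = 0) (h : m ≠ k)
      (h0 : m + k ≠ 0) : ⁅S.D (m + k) 1, v⁆ = 0 := by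
    simpa using Kills.lie_D hm hk h h0
  have key : ∀ r j : ℕ, 1 ≤ j → j ≤ r + 1 → ⁅S.D ((r + 2 : ℤ) * n + j) 1, v⁆ = 0 := by
    intro r
    induction r with
    | zero =>
      intro j hj1 hj2
      obtain rfl : j = 1 := by lia
      have := hadd h1 h2 (by lia) (by lia)
      rwa [show (n : ℤ) + (n + 1) = ((0 : ℕ) + 2 : ℤ) * n + (1 : ℕ) by push_cast; ring] at this
    | succ r ih =>
      intro j hj1 hj2
      have hpos : (0 : ℤ) ≤ r * n := by positivity
      rcases Nat.lt_or_ge j (r + 2) with hj | hj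
      · have := hadd h1 (ih j hj1 (by lia)) (by lia) (by lia)
        rwa [show (n : ℤ) + ((r + 2) * n + j) = ((r + 1 : ℕ) + 2 : ℤ) * n + j by
          push_cast; ring] at this
      · obtain rfl : j = r + 2 := by lia
        have := hadd h2 (ih (r + 1) (by lia) le_rfl) (by push_cast; lia) (by push_cast; lia)
        rwa [show (n : ℤ) + 1 + ((r + 2) * n + (r + 1 : ℕ)) =
          ((r + 1 : ℕ) + 2 : ℤ) * n + (r + 2 : ℕ) by push_cast; ring] at this
  refine ⟨(n + 2) * n + 1, fun k hk => ?_⟩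
  have hn' : (0 : ℤ) < n := by lia
  have hdiv := Int.emod_add_mul_ediv (k - 1) n
  have hr0 := Int.emod_nonneg (k - 1) hn'.ne'
  have hr1 := Int.emod_lt_of_pos (k - 1) hn'
  have hq : (n : ℤ) + 2 ≤ (k - 1) / n := by
    rw [Int.le_ediv_iff_mul_le hn']
    lia
  have := key (((k - 1) / n).toNat - 2) (((k - 1) % n).toNat + 1) (by lia) (by lia)
  rwa [show ((((k - 1) / n).toNat - 2 : ℕ) : ℤ) = (k - 1) / n - 2 by lia,
    show ((((k - 1) % n).toNat + 1 : ℕ) : ℤ) = (k - 1) % n + 1 by lia,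
    show ((k - 1) / n - 2 + 2) * (n : ℤ) + ((k - 1) % n + 1) = k by
      linear_combination hdiv] at this

lemma exists_kills_of_lie_D {n : ℤ} (hn : 1 ≤ n) {v : V} {X : Set A}
    (hv : ∃ k₀ : ℤ, ∀ k ≥ k₀, ⁅S.D k 1, v⁆ = 0) (hX : ∀ f ∈ X, S.Kills n f v) :
    ∃ k₀ : ℤ, ∀ k ≥ k₀, ∀ f ∈ X, S.Kills k f v := by
  obtain ⟨k₀, hk₀⟩ := hv
  refine ⟨max k₀ (n + 1) + n, fun k hk f hf => ?_⟩
  have := Kills.mul (hk₀ (k - n) (by lia)) (hX f hf) (by lia) (by lia) (by lia)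
  rwa [one_mul, sub_add_cancel] at this

lemma forall_exists_kills [IsSimpleOrder (LieSubmodule ℂ L V)] {I : Ideal A} {v : V} (hv0 : v ≠ 0)
    (hv : ∃ k₀ : ℤ, ∀ k ≥ k₀, ∀ f ∈ I, S.Kills k f v) (w : V) :
    ∃ k₀ : ℤ, ∀ k ≥ k₀, ∀ f ∈ I, S.Kills k f w := by
  let N : Submodule ℂ V :=
    { carrier := {w | ∃ k₀ : ℤ, ∀ k ≥ k₀, ∀ f ∈ I, S.Kills k f w}
      add_mem' := by
        rintro u w ⟨k₁, h₁⟩ ⟨k₂, h₂⟩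
        refine ⟨max k₁ k₂, fun k hk f hf => ⟨?_, fun x => ?_⟩⟩
        · rw [lie_add, (h₁ k (by lia) f hf).1, (h₂ k (by lia) f hf).1, add_zero]
        · rw [lie_add, (h₁ k (by lia) f hf).2, (h₂ k (by lia) f hf).2, add_zero]
      zero_mem' := ⟨0, fun k _ f _ => ⟨lie_zero _, fun x => lie_zero _⟩⟩
      smul_mem' := by
        rintro c u ⟨k₁, h₁⟩
        refine ⟨k₁, fun k hk f hf => ⟨?_, fun x => ?_⟩⟩
        · rw [lie_smul, (h₁ k hk f hf).1, smul_zero]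
        · rw [lie_smul, (h₁ k hk f hf).2, smul_zero] }
  have hN : N = ⊤ := by
    refine S.eq_top_of_stable N ?_ ?_ ?_ ?_ (v := v) hv hv0
    · rintro m y b u ⟨k₁, h₁⟩
      refine ⟨max k₁ (max (k₁ - m) (1 - m)), fun k hk f hf => ⟨?_, fun x => ?_⟩⟩
      · rw [lie_D_lie_E, (h₁ (m + k) (by lia) _ (I.mul_mem_right b hf)).2,
          (h₁ k (by lia) f hf).1, smul_zero, lie_zero, add_zero]
      · rw [lie_E_lie_E, (h₁ (k + m) (by lia) _ (I.mul_mem_right b hf)).2,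
          (h₁ k (by lia) f hf).2, if_neg (by lia), zero_smul, lie_zero, add_zero, add_zero]
    · rintro m b u ⟨k₁, h₁⟩
      refine ⟨max k₁ (max (k₁ - m) (1 - m)), fun k hk f hf => ⟨?_, fun x => ?_⟩⟩
      · rw [lie_D_lie_D, (h₁ (k + m) (by lia) _ (I.mul_mem_right b hf)).1,
          (h₁ k (by lia) f hf).1, if_neg (by lia), zero_smul, smul_zero, lie_zero, add_zero,
          add_zero]
      · have := S.lie_D_lie_E m k x b f u
        rw [(h₁ (k + m) (by lia) _ (I.mul_mem_left b hf)).2, (h₁ k (by lia) f hf).2, lie_zero,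
          smul_zero, zero_add] at this
        exact this.symm
    · rintro b u ⟨k₁, h₁⟩
      refine ⟨k₁, fun k hk f hf => ⟨?_, fun x => ?_⟩⟩
      · rw [← lie_K_lie, (h₁ k hk f hf).1, lie_zero]
      · rw [← lie_K_lie, (h₁ k hk f hf).2, lie_zero]
    · rintro b u ⟨k₁, h₁⟩
      refine ⟨k₁, fun k hk f hf => ⟨?_, fun x => ?_⟩⟩
      · rw [← lie_C_lie, (h₁ k hk f hf).1, lie_zero]
      · rw [← lie_C_lie, (h₁ k hk f hf).2, lie_zero]
  exact (hN ▸ Submodule.mem_top : w ∈ N)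

lemma exists_forall_kills_of_unbounded [FiniteDimensional ℂ g]
    [IsSimpleOrder (LieSubmodule ℂ L V)]
    (hfd : ∀ φ μ, FiniteDimensional ℂ (S.jointEig V φ μ))
    {Φ : Finset (Module.Dual ℂ S.H)} (hΦ0 : 0 ∈ Φ) (hΦ : ⨆ α ∈ Φ, S.rootSp α = ⊤)
    {φ : Module.Dual ℂ S.H} {μ : ℂ}
    (hB : ∀ B : ℕ, ∃ n : ℕ, B < Module.finrank ℂ (S.jointEig V φ (μ - n))) :
    ∃ μ' : ℂ, ∃ v ∈ S.jointEig V φ μ', v ≠ 0 ∧ ∃ k₀ : ℤ, ∀ k ≥ k₀, ∀ a, S.Kills k a v := by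
  obtain ⟨n, hn, v, hv, hv0, hkill⟩ := exists_kills_of_unbounded hfd hΦ0 hΦ hB (ℂ ∙ (1 : A))
  have h1 := Submodule.mem_span_singleton_self (R := ℂ) (1 : A)
  set I := S.annIdeal V 1 one_ne_zero φ (μ - n)
  have hI : IsCofiniteIdeal I := (S.finrank_quotient_annIdeal_le hfd hΦ0 hΦ _ _ _ _).1
  have hall := forall_exists_kills (I := I) hv0
    (exists_kills_of_lie_D le_rfl (exists_lie_D_eq_zero hn (hkill 1 h1).1.1 (hkill 1 h1).2.1)
      (fun f hf => hf v hv))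
  obtain ⟨F, hF, hFI⟩ := isCofiniteIdeal_iff_exists_fg.1 hI
  have hF' : FiniteDimensional ℂ ↥(F ⊔ ℂ ∙ (1 : A)) :=
    Module.Finite.iff_fg.2 (hF.sup (Submodule.fg_span_singleton 1))
  obtain ⟨m, hm, w, hw, hw0, hwkill⟩ := exists_kills_of_unbounded hfd hΦ0 hΦ hB (F ⊔ ℂ ∙ (1 : A))
  have h1' : (1 : A) ∈ F ⊔ ℂ ∙ (1 : A) := Submodule.mem_sup_right h1
  obtain ⟨k₁, hk₁⟩ := exists_kills_of_lie_D (n := m) (X := F) (by lia)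
    (exists_lie_D_eq_zero hm (hwkill 1 h1').1.1 (hwkill 1 h1').2.1)
    (fun f hf => (hwkill f (Submodule.mem_sup_left hf)).1)
  obtain ⟨k₂, hk₂⟩ := hall w
  refine ⟨_, w, hw, hw0, max k₁ k₂, fun k hk a => ?_⟩
  obtain ⟨y, hy, z, hz, rfl⟩ := Submodule.mem_sup.1 (hFI ▸ Submodule.mem_top : a ∈ _)
  exact (hk₁ k (by lia) y hy).add (hk₂ k (by lia) z hz)

end Unbounded

section LoopTrivial

lemma exists_nat_of_pow_toEnd_eq_zero {L V : Type*} [LieRing L] [LieAlgebra ℂ L]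
    [AddCommGroup V] [Module ℂ V] [LieRingModule L V] [LieModule ℂ L V] {h e f : L}
    (hef : ⁅e, f⁆ = h) (hhe : ⁅h, e⁆ = 2 • e) (hhf : ⁅h, f⁆ = -(2 • f)) {v : V} {c : ℂ}
    (hv0 : v ≠ 0) (hv : ⁅h, v⁆ = c • v) (he : ⁅e, v⁆ = 0)
    (hf : ∃ N : ℕ, (LieModule.toEnd ℂ L V f ^ N) v = 0) :
    ∃ n : ℕ, c = n ∧ (n = 0 → ⁅f, v⁆ = 0) := by
  rcases eq_or_ne h 0 with rfl | h0
  · rw [zero_lie, eq_comm, smul_eq_zero_iff_left hv0] at hv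
    have hf0 : (2 : ℂ) • f = 0 := by
      rw [zero_lie, eq_comm, neg_eq_zero] at hhf
      rw [two_smul, ← two_nsmul, hhf]
    have hf0 := (smul_eq_zero.1 hf0).resolve_left two_ne_zero
    exact ⟨0, by simpa using hv, fun _ => by rw [hf0, zero_lie]⟩
  · have t : IsSl2Triple h e f := ⟨h0, hef, hhe, hhf⟩
    have P : t.HasPrimitiveVectorWith v c := ⟨hv0, hv, he⟩
    obtain ⟨n, hn₁, hn₂⟩ := Nat.exists_not_and_succ_of_not_zero_of_exists
      (p := fun n => (LieModule.toEnd ℂ L V f ^ n) v = 0) (by simpa using hv0) hf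
    have := P.lie_e_pow_succ_toEnd_f n
    rw [hn₂, lie_zero, eq_comm, smul_eq_zero_iff_left hn₁, mul_eq_zero, sub_eq_zero] at this
    refine ⟨n, this.resolve_left (Nat.cast_add_one_ne_zero n), ?_⟩
    rintro rfl
    simpa using hn₂

variable {g A L : Type*} [LieRing g] [LieAlgebra ℂ g]
  [CommRing A] [Algebra ℂ A] [LieRing L] [LieAlgebra ℂ L] {S : LoopAffVir g A L}
  {V : Type*} [AddCommGroup V] [Module ℂ V] [LieRingModule L V] [LieModule ℂ L V]

lemma exists_nat_of_isSl2Triple (hK0 : ∀ v : V, ⁅S.K 1, v⁆ = 0) {h e f : g}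
    (t : IsSl2Triple h e f) {v : V} {c : ℂ} (hv0 : v ≠ 0) (hv : ⁅S.E 0 h 1, v⁆ = c • v) {k : ℤ}
    (he : ⁅S.E k e 1, v⁆ = 0)
    (hf : ∃ N : ℕ, (LieModule.toEnd ℂ L V (S.E (-k) f 1) ^ N) v = 0) :
    ∃ n : ℕ, c = n ∧ (n = 0 → ⁅S.E (-k) f 1, v⁆ = 0) := by
  refine exists_nat_of_pow_toEnd_eq_zero (h := S.E 0 h 1 + ((k : ℂ) * S.form e f) • S.K 1)
    (e := S.E k e 1) ?_ ?_ ?_ hv0 ?_ he hf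
  · rw [S.lie_EE, if_pos rfl, t.lie_e_f, add_neg_cancel, mul_one]
  · rw [add_lie, smul_lie, S.K_central, S.lie_EE, t.lie_h_e_nsmul]
    simp
  · rw [add_lie, smul_lie, S.K_central, S.lie_EE, t.lie_h_f_nsmul]
    simp
  · rw [add_lie, smul_lie, hK0, smul_zero, add_zero, hv]

variable [FiniteDimensional ℂ g] [LieAlgebra.IsSimple ℂ g]

lemma lie_E_neg_eq_zero
    (hnil : ∀ α : Module.Dual ℂ S.H, α ≠ 0 → S.rootSp α ≠ ⊥ → ∀ x ∈ S.rootSp α,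
      ∀ (n : ℤ) (a : A) (v : V), ∃ N : ℕ, (LieModule.toEnd ℂ L V (S.E n x a) ^ N) v = 0)
    (hK0 : ∀ v : V, ⁅S.K 1, v⁆ = 0) {φ : Module.Dual ℂ S.H} {μ : ℂ} {v : V}
    (hv : v ∈ S.jointEig V φ μ) (hv0 : v ≠ 0) {k : ℤ} (hk : ∀ x, ⁅S.E k x 1, v⁆ = 0)
    {α : Module.Dual ℂ S.H} (h0 : α ≠ 0) {x : g} (hx : x ∈ S.rootSp α) :
    ⁅S.E (-k) x 1, v⁆ = 0 := by
  by_cases hα : S.rootSp α = ⊥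
  · obtain rfl : x = 0 := by simpa [hα] using hx
    simp
  obtain ⟨h, e, f, t, hh, he, hf, hspan⟩ := S.exists_isSl2Triple h0 hα
  have hα' : S.rootSp (-α) ≠ ⊥ := (Submodule.ne_bot_iff _).2 ⟨f, hf, t.f_ne_zero⟩
  have hhv : ⁅S.E 0 h 1, v⁆ = φ ⟨h, hh⟩ • v := hv.1 ⟨h, hh⟩
  obtain ⟨n, hn, -⟩ := exists_nat_of_isSl2Triple hK0 t hv0 hhv (hk e)
    (hnil _ (neg_ne_zero.2 h0) hα' f hf _ _ _)
  obtain ⟨m, hm, hm'⟩ := exists_nat_of_isSl2Triple hK0 t.symm hv0 (c := -φ ⟨h, hh⟩)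
    (by rw [map_neg, LinearMap.neg_apply, neg_lie, hhv, neg_smul]) (hk f)
    (hnil _ h0 hα e he _ _ _)
  have hnm : ((n + m : ℕ) : ℂ) = 0 := by rw [Nat.cast_add, ← hn, ← hm, add_neg_cancel]
  obtain ⟨c, rfl⟩ := hspan x hx
  rw [map_smul, LinearMap.smul_apply, smul_lie, hm' (by have := Nat.cast_eq_zero.1 hnm; lia),
    smul_zero]

lemma rootSp_ne_bot_of_not_isLieAbelian (hg : ¬ IsLieAbelian g) {Φ : Finset (Module.Dual ℂ S.H)}
    (hΦ : ⨆ α ∈ Φ, S.rootSp α = ⊤) : ∃ α ≠ 0, S.rootSp α ≠ ⊥ := by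
  by_contra! h
  have hz : S.rootSp 0 = ⊤ := by
    rw [eq_top_iff, ← hΦ]
    refine iSup₂_le fun α _ => ?_
    rcases eq_or_ne α 0 with rfl | hα
    · exact le_rfl
    · rw [h α hα]
      exact bot_le
  refine hg ⟨fun x y => ?_⟩
  have hx : x ∈ S.H := (S.mem_rootSp_zero_iff x).1 (hz ▸ Submodule.mem_top)
  have hy : y ∈ S.rootSp 0 := hz ▸ Submodule.mem_top
  simpa using (S.rootSp_def 0 y).1 hy ⟨x, hx⟩

lemma exists_forall_lie_E_eq_zero {Φ : Finset (Module.Dual ℂ S.H)}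
    (hΦ : ⨆ α ∈ Φ, S.rootSp α = ⊤) {φ : Module.Dual ℂ S.H} {μ : ℂ} {v : V}
    (hv : v ∈ S.jointEig V φ μ) {k₀ : ℤ}
    (hk : ∀ k ≤ k₀, ∀ α ≠ 0, ∀ x ∈ S.rootSp α, ⁅S.E k x 1, v⁆ = 0) (x : g) :
    ∃ k₁ : ℤ, ∀ k ≤ k₁, ⁅S.E k x 1, v⁆ = 0 := by
  let N : Submodule ℂ g :=
    { carrier := {x | ∃ k₁ : ℤ, ∀ k ≤ k₁, ⁅S.E k x 1, v⁆ = 0}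
      add_mem' := by
        rintro x y ⟨k₁, h₁⟩ ⟨k₂, h₂⟩
        refine ⟨min k₁ k₂, fun k hk => ?_⟩
        rw [map_add, LinearMap.add_apply, add_lie, h₁ k (by lia), h₂ k (by lia), add_zero]
      zero_mem' := ⟨0, fun k _ => by simp⟩
      smul_mem' := by
        rintro c x ⟨k₁, h₁⟩
        refine ⟨k₁, fun k hk => ?_⟩
        rw [map_smul, LinearMap.smul_apply, smul_lie, h₁ k hk, smul_zero] }
  have hN : ∀ α ≠ 0, S.rootSp α ≤ N := fun α hα x hx => ⟨k₀, fun k hk' => hk k hk' α hα x hx⟩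
  have hlie : ∀ y : g, ∀ x ∈ N, ⁅y, x⁆ ∈ N := by
    intro y
    have hy : y ∈ ⨆ α ∈ Φ, S.rootSp α := hΦ ▸ Submodule.mem_top
    let P : Submodule ℂ g :=
      { carrier := {y | ∀ x ∈ N, ⁅y, x⁆ ∈ N}
        add_mem' := fun hy hz x hx => by
          rw [add_lie]
          exact N.add_mem (hy x hx) (hz x hx)
        zero_mem' := fun x _ => by
          rw [zero_lie]
          exact N.zero_mem
        smul_mem' := fun c y hy x hx => by
          rw [smul_lie]
          exact N.smul_mem c (hy x hx) }
    suffices hle : ⨆ α ∈ Φ, S.rootSp α ≤ P from hle hy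
    refine iSup₂_le fun α _ y hy => ?_
    rintro x ⟨k₁, h₁⟩
    rcases eq_or_ne α 0 with rfl | hα
    · have hyH := (S.mem_rootSp_zero_iff y).1 hy
      refine ⟨min k₁ (-1), fun k hk' => ?_⟩
      have := S.lie_E_lie_E 0 k y x 1 1 v
      rw [h₁ k (by lia), hv.1 ⟨y, hyH⟩, lie_smul, h₁ k (by lia), if_neg (by lia)] at this
      simpa using this.symm
    · refine ⟨min (min (2 * k₁) (2 * k₀)) (-1) - 1, fun k hk' => ?_⟩
      have := S.lie_E_lie_E (k / 2) (k - k / 2) y x 1 1 v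
      rw [h₁ (k - k / 2) (by lia), hk (k / 2) (by lia) α hα y hy, if_neg (by lia),
        add_sub_cancel] at this
      simpa using this.symm
  let J : LieIdeal ℂ g := { N with lie_mem := fun {y x} hx => hlie y x hx }
  have hJ : J = ⊤ := by
    refine (LieAlgebra.IsSimple.eq_bot_or_eq_top (R := ℂ) J).resolve_left fun hb => ?_
    obtain ⟨α, hα, hα'⟩ := rootSp_ne_bot_of_not_isLieAbelian
      (LieAlgebra.IsSimple.non_abelian ℂ) hΦ
    obtain ⟨x, hx, hx0⟩ := (Submodule.ne_bot_iff _).1 hα'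
    have : x ∈ J := hN α hα hx
    rw [hb] at this
    exact hx0 ((LieSubmodule.mem_bot x).1 this)
  exact (hJ ▸ LieSubmodule.mem_top x : x ∈ J)

omit [FiniteDimensional ℂ g] in
lemma lie_E_eq_zero_of_kills {k₀ : ℤ} {v : V} (hk : ∀ k ≥ k₀, ∀ a, S.Kills k a v)
    (hv : ∀ x, ∃ k₁ : ℤ, ∀ k ≤ k₁, ⁅S.E k x 1, v⁆ = 0) (n : ℤ) (x : g) (a : A) :
    ⁅S.E n x a, v⁆ = 0 := by
  have hx : x ∈ Submodule.span ℂ {z : g | ∃ x y : g, ⁅x, y⁆ = z} := by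
    rw [span_lie_eq_top g]
    exact Submodule.mem_top
  induction hx using Submodule.span_induction with
  | mem z hz =>
    obtain ⟨x, y, rfl⟩ := hz
    obtain ⟨k₁, h₁⟩ := hv x
    have key : ∀ m ≤ min k₁ (n - k₀), ⁅S.E n ⁅x, y⁆ a, v⁆ +
        (if n = 0 then (m : ℂ) * S.form x y else 0) • ⁅S.K a, v⁆ = 0 := by
      intro m hm
      have := S.lie_E_lie_E m (n - m) x y 1 a v
      rw [(hk (n - m) (by lia) a).2, h₁ m (by lia), add_sub_cancel, one_mul, lie_zero, lie_zero,
        add_zero] at this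
      rw [this]
      congr 2
      simp only [sub_eq_neg_self]
    have h1 := key _ le_rfl
    have h2 := key (min k₁ (n - k₀) - 1) (by lia)
    split_ifs at h1 h2 with hn
    · have h3 : S.form x y • ⁅S.K a, v⁆ = 0 := by
        have := congrArg₂ (· - ·) h1 h2
        simp only [add_sub_add_left_eq_sub, ← sub_smul, sub_self] at this
        rw [← this]
        congr 1
        push_cast
        ring
      rwa [mul_smul, h3, smul_zero, add_zero] at h1
    · simpa using h1
  | zero => simp
  | add x y _ _ hx hy => rw [map_add, LinearMap.add_apply, add_lie, hx, hy, add_zero]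
  | smul c x _ hx => rw [map_smul, LinearMap.smul_apply, smul_lie, hx, smul_zero]

omit [FiniteDimensional ℂ g] [LieAlgebra.IsSimple ℂ g] in
lemma lie_E_eq_zero_of_exists [IsSimpleOrder (LieSubmodule ℂ L V)] {v : V} (hv0 : v ≠ 0)
    (hv : ∀ n x a, ⁅S.E n x a, v⁆ = 0) (n : ℤ) (x : g) (a : A) (u : V) :
    ⁅S.E n x a, u⁆ = 0 := by
  let N : Submodule ℂ V := ⨅ (n) (x) (a), LinearMap.ker (LieModule.toEnd ℂ L V (S.E n x a))
  have mem_N {u : V} : u ∈ N ↔ ∀ n x a, ⁅S.E n x a, u⁆ = 0 := by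
    simp [N, Submodule.mem_iInf]
  have hN : N = ⊤ := by
    refine S.eq_top_of_stable N ?_ ?_ ?_ ?_ (mem_N.2 hv) hv0
    · intro m y b u hu
      rw [mem_N.1 hu]
      exact N.zero_mem
    · intro m b u hu
      rw [mem_N] at hu ⊢
      intro n x a
      have := S.lie_D_lie_E m n x b a u
      rw [hu, hu, lie_zero, smul_zero, zero_add] at this
      exact this.symm
    · intro b u hu
      rw [mem_N] at hu ⊢
      intro n x a
      rw [← lie_K_lie, hu, lie_zero]
    · intro b u hu
      rw [mem_N] at hu ⊢
      intro n x a
      rw [← lie_C_lie, hu, lie_zero]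
  exact mem_N.1 (hN ▸ Submodule.mem_top) n x a

omit [FiniteDimensional ℂ g] in
lemma lie_K_eq_zero_of_lie_E (hE : ∀ n x a, ∀ u : V, ⁅S.E n x a, u⁆ = 0) (a : A) (u : V) :
    ⁅S.K a, u⁆ = 0 := by
  obtain ⟨x, y, hxy⟩ : ∃ x y, S.form x y ≠ 0 := by
    by_contra! h
    have : Subsingleton g := ⟨fun x y => by rw [S.form_nondeg x (h x), S.form_nondeg y (h y)]⟩
    exact LieAlgebra.IsSimple.non_abelian (L := g) ℂ ⟨fun x y => Subsingleton.elim _ _⟩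
  have := S.lie_E_lie_E 1 (-1) x y 1 a u
  simp only [hE, zero_add, add_zero, one_mul, if_true, Int.cast_one] at this
  exact (smul_eq_zero.1 this.symm).resolve_left hxy

end LoopTrivial

section VirasoroOnly

lemma linearIndependent_of_lower_triangular {V : Type*} [AddCommGroup V] [Module ℂ V]
    {u : ℕ → V} {T : ℕ → V →ₗ[ℂ] V} (h0 : ∀ i j, j < i → T i (u j) = 0)
    (h1 : ∀ i, T i (u i) ≠ 0) : LinearIndependent ℂ u := by
  rw [linearIndependent_iff']
  intro s
  induction s using Finset.induction_on_max with
  | empty => simp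
  | insert a s hs ih =>
    intro c hc
    have hna : a ∉ s := fun h => (hs a h).false
    rw [Finset.sum_insert hna] at hc
    have hca : c a = 0 := by
      have := congrArg (T a) hc
      rw [map_add, map_sum, map_zero, map_smul, Finset.sum_eq_zero, add_zero] at this
      · exact (smul_eq_zero.1 this).resolve_right (h1 a)
      · intro i hi
        rw [map_smul, h0 a i (hs i hi), smul_zero]
    rw [hca, zero_smul, zero_add] at hc
    intro i hi
    rcases Finset.mem_insert.1 hi with rfl | hi
    · exact hca
    · exact ih c hc i hi

variable {g A L : Type*} [LieRing g] [LieAlgebra ℂ g]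
  [CommRing A] [Algebra ℂ A] [LieRing L] [LieAlgebra ℂ L] {S : LoopAffVir g A L}
  {V : Type*} [AddCommGroup V] [Module ℂ V] [LieRingModule L V] [LieModule ℂ L V]

lemma exists_lie_D_pred_eq_zero (hfd : ∀ φ μ, FiniteDimensional ℂ (S.jointEig V φ μ)) {q : ℤ}
    (hq : 1 ≤ q) {φ : Module.Dual ℂ S.H} {μ : ℂ} {v : V} (hv : v ∈ S.jointEig V φ μ) (hv0 : v ≠ 0)
    (hkill : ∀ k > q, ∀ a, ⁅S.D k a, v⁆ = 0) :
    ∃ μ', ∃ w ∈ S.jointEig V φ μ', w ≠ 0 ∧ ∀ k ≥ q, ∀ a, ⁅S.D k a, w⁆ = 0 := by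
  by_contra! h
  have hex : ∀ w : V, ∃ a : A, (w ≠ 0 ∧ (∃ μ', w ∈ S.jointEig V φ μ') ∧
      ∀ k > q, ∀ a, ⁅S.D k a, w⁆ = 0) → ⁅S.D q a, w⁆ ≠ 0 := by
    intro w
    by_contra! h'
    obtain ⟨hw0, ⟨μ', hw⟩, hwk⟩ := (h' 0).1
    obtain ⟨k, hk, a, ha⟩ := h μ' w hw hw0
    rcases hk.lt_or_eq with hk | rfl
    · exact ha (hwk k hk a)
    · exact ha (h' a).2
  choose a ha using hex
  let w : ℕ → V := fun r => (fun w => ⁅S.D q (a w), w⁆)^[r] v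
  have hws (r : ℕ) : w (r + 1) = ⁅S.D q (a (w r)), w r⁆ := Function.iterate_succ_apply' _ r v
  have hw : ∀ r : ℕ, w r ≠ 0 ∧ w r ∈ S.jointEig V φ (μ + r * q) ∧
      ∀ k > q, ∀ a, ⁅S.D k a, w r⁆ = 0 := by
    intro r
    induction r with
    | zero => exact ⟨hv0, by simpa [w] using hv, hkill⟩
    | succ r ih =>
      obtain ⟨h0, h1, h2⟩ := ih
      rw [hws]
      refine ⟨ha _ ⟨h0, ⟨_, h1⟩, h2⟩, ?_, fun k hk b => ?_⟩
      · have := S.lie_D_mem_jointEig h1 q (a (w r))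
        rwa [show μ + r * q + q = μ + (r + 1 : ℕ) * q by push_cast; ring] at this
      · rw [lie_D_lie_D, h2 k hk, h2 (k + q) (by lia), if_neg (by lia)]
        simp
  have hwa (r : ℕ) : ⁅S.D q (a (w r)), w r⁆ ≠ 0 := ha _ ⟨(hw r).1, ⟨_, (hw r).2.1⟩, (hw r).2.2⟩
  have hcomm (r : ℕ) (k : ℤ) (b : A) (hk : k > q) (hne : k ≠ (r + 1) * q) :
      ⁅S.D k b, ⁅S.D (-((r + 1) * q)) 1, w (r + 1)⁆⁆ =
        (((-((r + 1) * q) : ℤ) : ℂ) - k) • ⁅S.D (k - (r + 1) * q) b, w (r + 1)⁆ := by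
    rw [lie_D_lie_D, (hw (r + 1)).2.2 k hk, if_neg (by lia), mul_one, lie_zero, zero_smul,
      add_zero, add_zero, ← sub_eq_add_neg]
  let u : ℕ → V := fun r => ⁅S.D (-((r + 1) * q)) 1, w (r + 1)⁆
  have hu (r : ℕ) : u r ∈ S.jointEig V φ μ := by
    have := S.lie_D_mem_jointEig (hw (r + 1)).2.1 (-((r + 1) * q)) 1
    rwa [show μ + (r + 1 : ℕ) * (q : ℂ) + (-((r + 1) * q) : ℤ) = μ by push_cast; ring] at this
  have hli : LinearIndependent ℂ u := by
    refine linearIndependent_of_lower_triangular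
      (T := fun r => LieModule.toEnd ℂ L V (S.D ((r + 2) * q) (a (w (r + 1))))) ?_ ?_
    · intro i j hji
      have h1 : (j + 1 : ℤ) * q ≤ i * q := mul_le_mul_of_nonneg_right (by lia) (by lia)
      have h2 : (0 : ℤ) ≤ j * q := by positivity
      rw [LieModule.toEnd_apply_apply, hcomm _ _ _ (by lia) (by lia), (hw (j + 1)).2.2 _ (by lia),
        smul_zero]
    · intro i
      have h2 : (0 : ℤ) ≤ i * q := by positivity
      rw [LieModule.toEnd_apply_apply, hcomm _ _ _ (by lia) (by lia),
        show ((i : ℤ) + 2) * q - (i + 1) * q = q by ring]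
      refine smul_ne_zero ?_ (hwa _)
      rw [sub_ne_zero, ne_eq, Int.cast_inj]
      lia
  have := hfd φ μ
  refine Module.Finite.not_linearIndependent_of_infinite (R := ℂ)
    (fun r => (⟨u r, hu r⟩ : S.jointEig V φ μ)) ?_
  exact LinearIndependent.of_comp (S.jointEig V φ μ).subtype hli

lemma exists_highest_weight_vector (hfd : ∀ φ μ, FiniteDimensional ℂ (S.jointEig V φ μ))
    {φ : Module.Dual ℂ S.H} (p : ℕ) {μ : ℂ} {v : V} (hv : v ∈ S.jointEig V φ μ) (hv0 : v ≠ 0)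
    (hkill : ∀ k : ℤ, k > p → ∀ a, ⁅S.D k a, v⁆ = 0) :
    ∃ μ', ∃ w ∈ S.jointEig V φ μ', w ≠ 0 ∧ ∀ k > 0, ∀ a, ⁅S.D k a, w⁆ = 0 := by
  induction p generalizing μ v with
  | zero => exact ⟨μ, v, hv, hv0, hkill⟩
  | succ p ih =>
    obtain ⟨μ', w, hw, hw0, hwk⟩ := exists_lie_D_pred_eq_zero hfd (by lia) hv hv0 hkill
    exact ih hw hw0 fun k hk => hwk k (by push_cast; lia)

lemma eq_zero_of_lie_D_eq_zero [IsSimpleOrder (LieSubmodule ℂ L V)]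
    (hE : ∀ n x a, ∀ u : V, ⁅S.E n x a, u⁆ = 0) (hK : ∀ a, ∀ u : V, ⁅S.K a, u⁆ = 0)
    {φ ψ : Module.Dual ℂ S.H} {μ : ℂ} {v w : V} (hv : v ∈ S.jointEig V φ μ) (hv0 : v ≠ 0) {j : ℕ}
    (hj : 1 ≤ j) (hw : w ∈ S.jointEig V ψ (μ - j)) (h1 : ∀ a, ⁅S.D 1 a, w⁆ = 0)
    (h2 : ∀ a, ⁅S.D 2 a, w⁆ = 0) : w = 0 := by
  by_contra hw0
  have hpos : ∀ k : ℕ, ∀ a, ⁅S.D (k + 1) a, w⁆ = 0 := by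
    intro k
    induction k using Nat.strong_induction_on with
    | _ k ih =>
      intro a
      match k with
      | 0 => exact h1 a
      | 1 => exact h2 a
      | k + 2 =>
        have := Kills.lie_D (h1 1) (ih (k + 1) (by lia) a) (by lia) (by lia)
        rw [one_mul] at this
        rwa [show (1 : ℤ) + ((k + 1 : ℕ) + 1) = (k + 2 : ℕ) + 1 by push_cast; ring] at this
  let Ops : Set L := {z | (∃ m ≤ 0, ∃ b, z = S.D m b) ∨ ∃ b, z = S.C b}
  let N := opClosure V Ops (ℂ ∙ w)
  have N_le {P : Submodule ℂ V} (hw : w ∈ P) (hD : ∀ m ≤ 0, ∀ b, ∀ u ∈ P, ⁅S.D m b, u⁆ ∈ P)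
      (hC : ∀ b, ∀ u ∈ P, ⁅S.C b, u⁆ ∈ P) : N ≤ P := by
    refine sInf_le ⟨by simpa using hw, ?_⟩
    rintro z (⟨m, hm, b, rfl⟩ | ⟨b, rfl⟩)
    exacts [hD m hm b, hC b]
  have hwN : w ∈ N := by
    refine Submodule.mem_sInf.2 fun P hP => hP.1 (Submodule.mem_span_singleton_self w)
  have hND : ∀ m ≤ 0, ∀ b, ∀ u ∈ N, ⁅S.D m b, u⁆ ∈ N := fun m hm b u hu =>
    Submodule.mem_sInf.2 fun P hP => hP.2 _ (Or.inl ⟨m, hm, b, rfl⟩) u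
      (Submodule.mem_sInf.1 hu P hP)
  have hNC : ∀ b, ∀ u ∈ N, ⁅S.C b, u⁆ ∈ N := fun b u hu =>
    Submodule.mem_sInf.2 fun P hP => hP.2 _ (Or.inr ⟨b, rfl⟩) u (Submodule.mem_sInf.1 hu P hP)
  have hNpos : ∀ k > 0, ∀ b, ∀ u ∈ N, ⁅S.D k b, u⁆ ∈ N := by
    let P : Submodule ℂ V := N ⊓ ⨅ (k : ℤ) (_ : k > 0) (b : A),
      N.comap (LieModule.toEnd ℂ L V (S.D k b))
    have mem_P {u : V} : u ∈ P ↔ u ∈ N ∧ ∀ k > 0, ∀ b, ⁅S.D k b, u⁆ ∈ N := by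
      simp [P, Submodule.mem_iInf]
    suffices N ≤ P from fun k hk b u hu => (mem_P.1 (this hu)).2 k hk b
    refine N_le (mem_P.2 ⟨hwN, fun k hk b => ?_⟩) ?_ ?_
    · have := hpos (k - 1).toNat b
      rw [show ((k - 1).toNat : ℤ) + 1 = k by lia] at this
      rw [this]
      exact N.zero_mem
    · intro m hm c u hu
      rw [mem_P] at hu ⊢
      refine ⟨hND m hm c u hu.1, fun k hk b => ?_⟩
      rw [lie_D_lie_D]
      refine N.add_mem (N.add_mem (N.smul_mem _ ?_) (N.smul_mem _ (hNC _ u hu.1)))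
        (hND m hm c _ (hu.2 k hk b))
      rcases lt_or_ge 0 (k + m) with h | h
      · exact hu.2 _ h _
      · exact hND _ h _ u hu.1
    · intro c u hu
      rw [mem_P] at hu ⊢
      refine ⟨hNC c u hu.1, fun k hk b => ?_⟩
      rw [← lie_C_lie]
      exact hNC c _ (hu.2 k hk b)
  have hN : N = ⊤ := by
    refine S.eq_top_of_stable N (fun n x a u _ => ?_) (fun n a u hu => ?_) (fun a u _ => ?_) hNC
      hwN hw0
    · rw [hE]
      exact N.zero_mem
    · rcases lt_or_ge 0 n with h | h
      · exact hNpos n h a u hu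
      · exact hND n h a u hu
    · rw [hK]
      exact N.zero_mem
  let T := LieModule.toEnd ℂ L V (S.D 0 1)
  have hNle : N ≤ ⨆ n : ℕ, T.eigenspace (μ - j - n) := by
    refine N_le (Submodule.mem_iSup_of_mem 0 ?_) ?_ ?_
    · rw [Module.End.mem_eigenspace_iff, Nat.cast_zero, sub_zero]
      exact hw.2
    · intro m hm b u hu
      induction hu using Submodule.iSup_induction' with
      | mem n u hu =>
        rw [Module.End.mem_eigenspace_iff, LieModule.toEnd_apply_apply] at hu
        refine Submodule.mem_iSup_of_mem (n + m.natAbs) ?_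
        rw [Module.End.mem_eigenspace_iff, LieModule.toEnd_apply_apply, lie_D_lie_D, hu, zero_add,
          one_mul, lie_smul, ← sub_eq_zero]
        have hm' : (m : ℂ) = -(m.natAbs : ℂ) := by
          rw [← Int.cast_natCast, ← Int.cast_neg, Int.cast_inj]
          lia
        simp only [Int.cast_zero, sub_zero, hm']
        push_cast
        simp
        module
      | zero => rw [lie_zero]; exact Submodule.zero_mem _
      | add x y _ _ hx hy => rw [lie_add]; exact Submodule.add_mem _ hx hy
    · intro b u hu
      induction hu using Submodule.iSup_induction' with
      | mem n u hu =>
        rw [Module.End.mem_eigenspace_iff, LieModule.toEnd_apply_apply] at hu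
        refine Submodule.mem_iSup_of_mem n ?_
        rw [Module.End.mem_eigenspace_iff, LieModule.toEnd_apply_apply, ← lie_C_lie, hu, lie_smul]
      | zero => rw [lie_zero]; exact Submodule.zero_mem _
      | add x y _ _ hx hy => rw [lie_add]; exact Submodule.add_mem _ hx hy
  have hle : ⨆ n : ℕ, T.eigenspace (μ - j - n) ≤ ⨆ ν, ⨆ (_ : ν ≠ μ), T.eigenspace ν := by
    refine iSup_le fun n => le_iSup₂_of_le (μ - j - n) ?_ le_rfl
    rw [sub_sub, ne_eq, sub_eq_self, ← Nat.cast_add, Nat.cast_eq_zero]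
    lia
  have hdisj := T.eigenspaces_iSupIndep μ
  have hvT : v ∈ T.eigenspace μ := Module.End.mem_eigenspace_iff.2 hv.2
  exact hv0 (Submodule.disjoint_def.1 hdisj v hvT (hle (hNle (hN ▸ Submodule.mem_top))))

lemma exists_annihilates_of_lie_E_eq_zero [FiniteDimensional ℂ g] [LieAlgebra.IsSimple ℂ g]
    [Algebra.FiniteType ℂ A] [IsSimpleOrder (LieSubmodule ℂ L V)]
    (hfd : ∀ φ μ, FiniteDimensional ℂ (S.jointEig V φ μ))
    {Φ : Finset (Module.Dual ℂ S.H)} (hΦ0 : 0 ∈ Φ) (hΦ : ⨆ α ∈ Φ, S.rootSp α = ⊤)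
    (hE : ∀ n x a, ∀ u : V, ⁅S.E n x a, u⁆ = 0) (hK : ∀ a, ∀ u : V, ⁅S.K a, u⁆ = 0)
    {φ : Module.Dual ℂ S.H} {μ : ℂ} {v : V} (hv : v ∈ S.jointEig V φ μ) (hv0 : v ≠ 0)
    (hkill : ∀ k > 0, ∀ a, ⁅S.D k a, v⁆ = 0) :
    ∃ R : Ideal A, IsCofiniteIdeal R ∧ S.Annihilates V R := by
  set Q := S.annIdeal V (-1) (by decide) φ μ ⊓ S.annIdeal V (-2) (by decide) φ μ
  have hQ : IsCofiniteIdeal Q := isCofiniteIdeal_inf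
    (S.finrank_quotient_annIdeal_le hfd hΦ0 hΦ _ _ _ _).1
    (S.finrank_quotient_annIdeal_le hfd hΦ0 hΦ _ _ _ _).1
  have hneg : ∀ j : ℕ, ∀ a ∈ Q, ⁅S.D (-(j + 1)) a, v⁆ = 0 := by
    intro j
    induction j using Nat.strong_induction_on with
    | _ j ih =>
      intro a ha
      match j with
      | 0 => exact (mem_annIdeal.1 ha.1 v hv).1
      | 1 => exact (mem_annIdeal.1 ha.2 v hv).1
      | j + 2 =>
        refine eq_zero_of_lie_D_eq_zero (ψ := φ) (j := j + 3) hE hK hv hv0 (by lia) ?_ ?_ ?_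
        · have := S.lie_D_mem_jointEig hv (-((j + 2 : ℕ) + 1)) a
          rwa [show μ + ((-((j + 2 : ℕ) + 1) : ℤ) : ℂ) = μ - (j + 3 : ℕ) by push_cast; ring] at this
        · intro b
          have := ih (j + 1) (by lia) _ (Q.mul_mem_left b ha)
          rw [lie_D_lie_D, hkill 1 (by lia), lie_zero, if_neg (by lia),
            show (1 : ℤ) + -((j + 2 : ℕ) + 1) = -((j + 1 : ℕ) + 1) by push_cast; ring, this]
          simp
        · intro b
          have := ih j (by lia) _ (Q.mul_mem_left b ha)
          rw [lie_D_lie_D, hkill 2 (by lia), lie_zero, if_neg (by lia),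
            show (2 : ℤ) + -((j + 2 : ℕ) + 1) = -(j + 1) by push_cast; ring, this]
          simp
  refine exists_annihilates_of_kills hQ hv0 fun a ha k hk => ⟨?_, fun x => hE k x a v⟩
  rcases lt_or_gt_of_ne hk with h | h
  · have := hneg (-k - 1).toNat a ha
    rwa [show -(((-k - 1).toNat : ℤ) + 1) = k by lia] at this
  · exact hkill k h a

lemma exists_annihilates_of_unbounded [FiniteDimensional ℂ g] [LieAlgebra.IsSimple ℂ g]
    [Algebra.FiniteType ℂ A] [IsSimpleOrder (LieSubmodule ℂ L V)]
    (hfd : ∀ φ μ, FiniteDimensional ℂ (S.jointEig V φ μ))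
    {Φ : Finset (Module.Dual ℂ S.H)} (hΦ0 : 0 ∈ Φ) (hΦ : ⨆ α ∈ Φ, S.rootSp α = ⊤)
    (hnil : ∀ α : Module.Dual ℂ S.H, α ≠ 0 → S.rootSp α ≠ ⊥ → ∀ x ∈ S.rootSp α,
      ∀ (n : ℤ) (a : A) (v : V), ∃ N : ℕ, (LieModule.toEnd ℂ L V (S.E n x a) ^ N) v = 0)
    (hK0 : ∀ v : V, ⁅S.K 1, v⁆ = 0) {φ : Module.Dual ℂ S.H} {μ : ℂ}
    (hB : ∀ B : ℕ, ∃ n : ℕ, B < Module.finrank ℂ (S.jointEig V φ (μ - n))) :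
    ∃ R : Ideal A, IsCofiniteIdeal R ∧ S.Annihilates V R := by
  obtain ⟨μ', v, hv, hv0, k₀, hk₀⟩ := exists_forall_kills_of_unbounded hfd hΦ0 hΦ hB
  have hE := lie_E_eq_zero_of_exists hv0 (lie_E_eq_zero_of_kills hk₀
    (exists_forall_lie_E_eq_zero hΦ hv (k₀ := -k₀) fun k hk α hα x hx => by
      have := lie_E_neg_eq_zero hnil hK0 hv hv0 (hk₀ (-k) (by lia) 1).2 hα hx
      rwa [neg_neg] at this))
  obtain ⟨μ'', w, hw, hw0, hwk⟩ := exists_highest_weight_vector hfd k₀.toNat hv hv0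
    fun k hk a => (hk₀ k (by lia) a).1
  exact exists_annihilates_of_lie_E_eq_zero hfd hΦ0 hΦ hE (lie_K_eq_zero_of_lie_E hE) hw hw0 hwk

end VirasoroOnly

section Flip

variable {g A L : Type*} [LieRing g] [LieAlgebra ℂ g] [CommRing A] [Algebra ℂ A]
  [LieRing L] [LieAlgebra ℂ L] (S : LoopAffVir g A L)

/-- The realization of the loop affine-Virasoro algebra obtained from the involution
`t ↦ t⁻¹`. -/
def flip : LoopAffVir g A L where
  H := S.H
  isCartan := S.isCartan
  form := S.form
  form_symm := S.form_symm
  form_nondeg := S.form_nondeg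
  form_invariant := S.form_invariant
  rootSp := S.rootSp
  rootSp_def := S.rootSp_def
  Δplus := S.Δplus
  Δplus_root := S.Δplus_root
  Δplus_cover := S.Δplus_cover
  Δplus_disj := S.Δplus_disj
  E n := S.E (-n)
  D n := -S.D (-n)
  K := -S.K
  C := -S.C
  lie_EE n m x y a b := by
    rw [S.lie_EE, neg_add]
    by_cases h : m = -n
    · simp [h]
    · rw [if_neg h, if_neg (by lia)]
      simp
  lie_DE n m x a b := by
    rw [LinearMap.neg_apply, neg_lie, S.lie_DE, neg_add]
    simp
  lie_DD n m a b := by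
    rw [LinearMap.neg_apply, LinearMap.neg_apply, neg_lie, lie_neg, neg_neg, S.lie_DD, neg_add]
    by_cases h : m = -n
    · simp [h]
      module
    · rw [if_neg h, if_neg (by lia)]
      simp
      module
  K_central a z := by simp [S.K_central]
  C_central a z := by simp [S.C_central]
  span_top := by
    rw [eq_top_iff, ← S.span_top, Submodule.span_le]
    rintro z (((⟨n, x, a, rfl⟩ | ⟨n, a, rfl⟩) | ⟨a, rfl⟩) | ⟨a, rfl⟩)
    · exact Submodule.subset_span (.inl (.inl (.inl ⟨-n, x, a, by simp⟩)))
    · exact Submodule.subset_span (.inl (.inl (.inr ⟨-n, -a, by simp⟩)))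
    · exact Submodule.subset_span (.inl (.inr ⟨-a, by simp⟩))
    · exact Submodule.subset_span (.inr ⟨-a, by simp⟩)

variable {S} {V : Type*} [AddCommGroup V] [Module ℂ V] [LieRingModule L V] [LieModule ℂ L V]

lemma jointEig_flip (φ : Module.Dual ℂ S.H) (μ : ℂ) :
    S.flip.jointEig V φ μ = S.jointEig V φ (-μ) := by
  ext v
  change ((∀ h : S.H, ⁅S.E (-0) h 1, v⁆ = φ h • v) ∧ ⁅(-S.D (-0)) 1, v⁆ = μ • v) ↔
    ((∀ h : S.H, ⁅S.E 0 h 1, v⁆ = φ h • v) ∧ ⁅S.D 0 1, v⁆ = -μ • v)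
  rw [neg_zero, LinearMap.neg_apply, neg_lie, neg_smul, neg_eq_iff_eq_neg]

omit [Module ℂ V] [LieModule ℂ L V] in
lemma annihilates_flip {R : Ideal A} : S.flip.Annihilates V R ↔ S.Annihilates V R := by
  change (∀ a ∈ R, (∀ (n : ℤ) (x : g) (v : V), ⁅S.E (-n) x a, v⁆ = 0) ∧
    (∀ (n : ℤ) (v : V), ⁅(-S.D (-n)) a, v⁆ = 0) ∧ (∀ v : V, ⁅(-S.K) a, v⁆ = 0) ∧
    ∀ v : V, ⁅(-S.C) a, v⁆ = 0) ↔ _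
  simp only [LinearMap.neg_apply, neg_lie, neg_eq_zero]
  refine forall₂_congr fun a _ => and_congr ?_ (and_congr ?_ Iff.rfl)
  · exact (Equiv.neg ℤ).forall_congr fun _ => Iff.rfl
  · exact (Equiv.neg ℤ).forall_congr fun _ => Iff.rfl

theorem exists_annihilates [FiniteDimensional ℂ g] [LieAlgebra.IsSimple ℂ g]
    [Algebra.FiniteType ℂ A] [IsSimpleOrder (LieSubmodule ℂ L V)] (hInt : S.IsIntegrable V)
    (hK0 : ∀ v : V, ⁅S.K 1, v⁆ = 0) : ∃ R : Ideal A, IsCofiniteIdeal R ∧ S.Annihilates V R := by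
  obtain ⟨hW, hF, hnil⟩ := hInt
  have hfd := S.finiteDimensional_jointEig hW hF hK0
  obtain ⟨Φ, hΦ0, hΦ⟩ := S.exists_finset_iSup_rootSp
  obtain ⟨φ, μ, hne⟩ := S.exists_jointEig_ne_bot V hW
  by_cases hneg : ∃ α, ∀ B : ℕ, ∃ n : ℕ, B < Module.finrank ℂ (S.jointEig V (φ + α) (μ - n))
  · obtain ⟨α, hα⟩ := hneg
    exact exists_annihilates_of_unbounded hfd hΦ0 hΦ hnil hK0 hα
  by_cases hpos : ∃ α, ∀ B : ℕ, ∃ n : ℕ, B < Module.finrank ℂ (S.jointEig V (φ + α) (μ + n))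
  · obtain ⟨α, hα⟩ := hpos
    have hfd' (φ : Module.Dual ℂ S.H) (μ : ℂ) : FiniteDimensional ℂ (S.flip.jointEig V φ μ) := by
      rw [jointEig_flip]
      exact hfd φ (-μ)
    obtain ⟨R, hR, hRV⟩ := exists_annihilates_of_unbounded (S := S.flip) (V := V) (Φ := Φ)
      (φ := φ + α) (μ := -μ) hfd' hΦ0 hΦ
      (fun α h0 hα x hx n => hnil α h0 hα x hx (-n))
      (fun v => by rw [show S.flip.K 1 = -S.K 1 from rfl, neg_lie, hK0, neg_zero])
      (fun B => by
        obtain ⟨n, hn⟩ := hα B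
        refine ⟨n, ?_⟩
        rwa [jointEig_flip, neg_sub, sub_neg_eq_add, add_comm (n : ℂ)])
    exact ⟨R, hR, annihilates_flip.1 hRV⟩
  push Not at hneg hpos
  choose B₁ hB₁ using hneg
  choose B₂ hB₂ using hpos
  refine exists_annihilates_of_bounded hfd hΦ0 hΦ hne (B := ∑ α ∈ Φ, (B₁ α + B₂ α))
    fun α hα n => ?_
  have hle := Finset.single_le_sum (f := fun α => B₁ α + B₂ α) (fun _ _ => Nat.zero_le _) hα
  obtain ⟨m, rfl | rfl⟩ := n.eq_nat_or_neg
  · rw [Int.cast_natCast]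
    exact (hB₂ α m).trans ((Nat.le_add_left _ _).trans hle)
  · rw [Int.cast_neg, Int.cast_natCast, ← sub_eq_add_neg]
    exact (hB₁ α m).trans ((Nat.le_add_right _ _).trans hle)

end Flip

end LoopAffVir

/-- Proposition `p3`.  Let `V` be an irreducible integrable
`𝔏(A)`-module with finite dimensional weight spaces on which `K ⊗ 1` acts trivially, and
`M` its highest weight space.  Then there is a cofinite ideal `R` of `A` with
`(Vir ⊗ R) ⬝ M = 0`. -/
theorem statement15
    {g A L : Type*} [LieRing g] [LieAlgebra ℂ g] [FiniteDimensional ℂ g]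
    [LieAlgebra.IsSimple ℂ g]
    [CommRing A] [Algebra ℂ A] [Algebra.FiniteType ℂ A]
    [LieRing L] [LieAlgebra ℂ L]
    (S : LoopAffVir g A L)
    (V : Type*) [AddCommGroup V] [Module ℂ V] [LieRingModule L V] [LieModule ℂ L V]
    (hIrr : IsSimpleOrder (LieSubmodule ℂ L V))
    (hInt : S.IsIntegrable V)
    (hK0 : ∀ v : V, ⁅S.K 1, v⁆ = 0)
    :
    ∃ R : Ideal A, IsCofiniteIdeal R ∧ ∀ a ∈ R, ∀ v ∈ S.hwSpace V,
      (∀ n : ℤ, ⁅S.D n a, v⁆ = 0) ∧ ⁅S.C a, v⁆ = 0 := by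
  obtain ⟨R, hR, hRV⟩ := LoopAffVir.exists_annihilates hInt hK0
  exact ⟨R, hR, fun a ha v _ => ⟨fun n => (hRV a ha).2.1 n v, (hRV a ha).2.2.2 v⟩⟩
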